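/- arXiv:2512.24367 — 3 statements merged into one kernel-verified Lean document; each statement's English description precedes it below -/
import Mathlib

section
/- For each n ≥ 2 let X̃⁽ⁿ⁾ and Ỹ⁽ⁿ⁾ be independent random vectors, each constructed as follows: take (u₁,…,u_n) with i.i.d. coordinates uniform on [−1,1], independently pick an index K uniformly from {1,…,n} and a sign S uniformly from {−1,1}, and replace the K-th coordinate by S (this gives a point uniformly distributed on the boundary ∂B_∞^n of the cube with respect to the cone measure). Then the random variables √n · ( n^{−1/2} ‖X̃⁽ⁿ⁾ − Ỹ⁽ⁿ⁾‖₂ − √(2/3) ) converge in distribution, as n → ∞, to a centered Gaussian random variable with variance 7/30. -/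
/-!
Write `u`, `v` for the points of the full cube from which the boundary points `x`, `y` are obtained
by replacing one coordinate each. The variables `(uᵢ - vᵢ)²` are i.i.d. with mean `2/3` and variance
`28/45`, so the classical central limit theorem applies to `W = n^{-1/2} (‖u - v‖₂² - 2n/3)`; scaled
by `(2 √(2/3))⁻¹`, the derivative of the square root at `2/3`, it has limiting variance
`28/45 * 3/8 = 7/30` (`clt_cube`). To use a single probability space, `u` and `v` are realised as
initial segments of an infinite sequence of pairs.

Replacing two coordinates changes the squared distance by at most `8` (`abs_sum_replace_le`), and
`√n (n^{-1/2} √q - √(2/3))` differs from its linearisation by a quadratic error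
(`abs_sqrt_linearize`). Hence the rescaled distance of `x` and `y` differs from `(2 √(2/3))⁻¹ W` by at
most `136 (W² + 1) / √n`. Since `E W² = 28/45` for every `n ≥ 1`, the expectations of a Lipschitz
function of the two variables differ by `O(n^{-1/2})` (`abs_integral_sub_le`). Bounded Lipschitz test
functions determine weak convergence of probability measures, which gives the claim.
-/

open MeasureTheory ProbabilityTheory Real Filter Topology

/-- The Euclidean norm `‖x‖₂ = (∑ x_i²)^{1/2}` on `ℝ^n`. -/
noncomputable def enorm2 {n : ℕ} (x : Fin n → ℝ) : ℝ := Real.sqrt (∑ i, (x i) ^ 2)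

/-- Uniform probability measure on the cube `[-1,1]^n`. -/
noncomputable def unifCube (n : ℕ) : Measure (Fin n → ℝ) :=
  (volume {x : Fin n → ℝ | ∀ i, x i ∈ Set.Icc (-1 : ℝ) 1})⁻¹ •
    volume.restrict {x : Fin n → ℝ | ∀ i, x i ∈ Set.Icc (-1 : ℝ) 1}

/-- Uniform probability measure on `{1, …, n}` (as `Fin n`). -/
noncomputable def unifFin (n : ℕ) : Measure (Fin n) := ((n : ENNReal))⁻¹ • Measure.count

/-- Uniform probability measure on `{-1, 1} ⊆ ℝ`. -/
noncomputable def unifSign : Measure ℝ :=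
  (2 : ENNReal)⁻¹ • (Measure.dirac (-1) + Measure.dirac 1)

/-- The distribution of a random point of `∂B_∞^n` obtained by taking i.i.d. coordinates
uniform on `[-1,1]`, picking an independent uniform index `K` and an independent uniform
sign `S`, and replacing the `K`-th coordinate by `S` (the cone measure on `∂B_∞^n`). -/
noncomputable def coneBoundaryCube (n : ℕ) : Measure (Fin n → ℝ) :=
  Measure.map (fun q : (Fin n → ℝ) × Fin n × ℝ => Function.update q.1 q.2.1 q.2.2)
    ((unifCube n).prod ((unifFin n).prod unifSign))

/-! ### The uniform measures -/

/-- The uniform distribution on `[-1,1]`. -/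
noncomputable def unifOne : Measure ℝ := (2 : ENNReal)⁻¹ • volume.restrict (Set.Icc (-1 : ℝ) 1)

instance : IsProbabilityMeasure unifOne := by
  constructor
  simp only [unifOne, Measure.smul_apply, smul_eq_mul, Measure.restrict_apply_univ,
    Real.volume_Icc]
  norm_num
  exact ENNReal.inv_mul_cancel (by simp) (by simp)

lemma unifCube_eq_pi (n : ℕ) : unifCube n = Measure.pi (fun _ : Fin n => unifOne) := by
  have hset : {x : Fin n → ℝ | ∀ i, x i ∈ Set.Icc (-1 : ℝ) 1}
      = Set.univ.pi (fun _ : Fin n => Set.Icc (-1 : ℝ) 1) := by ext; simp only [Set.mem_ofPred_eq, Set.mem_univ_pi]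
  symm
  refine Measure.pi_eq fun s hs => ?_
  rw [unifCube, hset, Measure.smul_apply, volume_pi, Measure.restrict_pi_pi, Measure.pi_pi,
    Measure.pi_pi]
  simp only [unifOne, Measure.smul_apply, smul_eq_mul, Real.volume_Icc, Finset.prod_mul_distrib,
    Finset.prod_const]
  norm_num
  rw [ENNReal.inv_pow]

instance (n : ℕ) : IsProbabilityMeasure (unifCube n) := by
  rw [unifCube_eq_pi]; infer_instance

instance (n : ℕ) [NeZero n] : IsProbabilityMeasure (unifFin n) := by
  constructor
  simp only [unifFin, Measure.smul_apply, smul_eq_mul, Measure.count_univ]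
  simp only [ENat.card_eq_coe_fintype_card, Fintype.card_fin, ENat.toENNReal_coe]
  exact ENNReal.inv_mul_cancel (by simp [NeZero.ne n]) (by simp)

instance : IsProbabilityMeasure unifSign := by
  constructor
  simp only [unifSign, Measure.smul_apply, smul_eq_mul, Measure.add_apply, measure_univ]
  norm_num
  exact ENNReal.inv_mul_cancel (by simp) (by simp)

lemma ae_abs_le_unifSign : ∀ᵐ s ∂unifSign, |s| ≤ 1 := by
  refine Measure.ae_smul_measure ?_ _
  rw [ae_add_measure_iff]
  exact ⟨by rw [ae_dirac_eq]; simp, by rw [ae_dirac_eq]; simp⟩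

lemma ae_abs_le_unifOne : ∀ᵐ s ∂unifOne, |s| ≤ 1 := by
  refine Measure.ae_smul_measure ?_ _
  filter_upwards [ae_restrict_mem measurableSet_Icc] with s hs
  exact abs_le.2 hs

lemma ae_abs_le_unifCube (n : ℕ) : ∀ᵐ u ∂unifCube n, ∀ i, |u i| ≤ 1 := by
  rw [unifCube_eq_pi, ae_all_iff]
  intro i
  exact (measurePreserving_eval (fun _ : Fin n => unifOne) i).quasiMeasurePreserving.ae
    ae_abs_le_unifOne

/-- The map replacing the `K`-th coordinate of `u` by `S`. -/
def replaceCoord (n : ℕ) (q : (Fin n → ℝ) × Fin n × ℝ) : Fin n → ℝ :=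
  Function.update q.1 q.2.1 q.2.2

lemma measurable_replaceCoord (n : ℕ) : Measurable (replaceCoord n) := by
  refine measurable_pi_iff.2 fun i => ?_
  simp only [replaceCoord, Function.update_apply]
  refine Measurable.ite ?_ (by fun_prop) (by fun_prop)
  exact measurableSet_eq_fun measurable_const (by fun_prop)

/-! ### Moments of `(u - v)²` -/

lemma integral_unifOne (g : ℝ → ℝ) : ∫ x, g x ∂unifOne = 2⁻¹ * ∫ x in (-1 : ℝ)..1, g x := by
  rw [unifOne, integral_smul_measure, intervalIntegral.integral_of_le (by norm_num),
    integral_Icc_eq_integral_Ioc]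
  simp

lemma memLp_sq_diff (p : ENNReal) :
    MemLp (fun z : ℝ × ℝ => (z.1 - z.2) ^ 2) p (unifOne.prod unifOne) := by
  refine MemLp.of_bound (by fun_prop) 4 ?_
  have h1 := (Measure.quasiMeasurePreserving_fst (μ := unifOne) (ν := unifOne)).ae
    ae_abs_le_unifOne
  have h2 := (Measure.quasiMeasurePreserving_snd (μ := unifOne) (ν := unifOne)).ae
    ae_abs_le_unifOne
  filter_upwards [h1, h2] with z h1 h2
  rw [abs_le] at h1 h2
  rw [Real.norm_eq_abs, abs_of_nonneg (sq_nonneg _)]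
  nlinarith

lemma mean_sq_diff : ∫ z, (z.1 - z.2) ^ 2 ∂(unifOne.prod unifOne) = 2 / 3 := by
  rw [integral_prod _ ((memLp_sq_diff 1).integrable le_rfl)]
  simp only [integral_unifOne]
  have h : ∀ x : ℝ, ∫ y in (-1 : ℝ)..1, (x - y) ^ 2 = 2 * x ^ 2 + 2 / 3 := by
    intro x
    rw [intervalIntegral.integral_comp_sub_left (fun y => y ^ 2), integral_pow]
    norm_num; ring
  simp only [h]
  rw [intervalIntegral.integral_const_mul, intervalIntegral.integral_add
    (Continuous.intervalIntegrable (by fun_prop) _ _)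
    (Continuous.intervalIntegrable (by fun_prop) _ _), intervalIntegral.integral_const_mul,
    integral_pow]
  norm_num

lemma var_sq_diff :
    Var[fun z : ℝ × ℝ => (z.1 - z.2) ^ 2; unifOne.prod unifOne] = 28 / 45 := by
  rw [variance_eq_sub (memLp_sq_diff 2), mean_sq_diff]
  have hint : Integrable (fun z : ℝ × ℝ => ((z.1 - z.2) ^ 2) ^ 2) (unifOne.prod unifOne) :=
    (memLp_sq_diff 2).integrable_sq
  simp only [Pi.pow_apply]
  rw [integral_prod _ hint]
  simp only [integral_unifOne]
  have h : ∀ x : ℝ, ∫ y in (-1 : ℝ)..1, ((x - y) ^ 2) ^ 2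
      = 2 * x ^ 4 + 4 * x ^ 2 + 2 / 5 := by
    intro x
    simp only [← pow_mul]
    rw [intervalIntegral.integral_comp_sub_left (fun y => y ^ (2 * 2)), integral_pow]
    norm_num; ring
  simp only [h]
  rw [intervalIntegral.integral_const_mul, intervalIntegral.integral_add
    (Continuous.intervalIntegrable (by fun_prop) _ _)
    (Continuous.intervalIntegrable (by fun_prop) _ _), intervalIntegral.integral_add
    (Continuous.intervalIntegrable (by fun_prop) _ _)
    (Continuous.intervalIntegrable (by fun_prop) _ _), intervalIntegral.integral_const_mul,
    intervalIntegral.integral_const_mul, integral_pow, integral_pow]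
  norm_num

/-! ### The central limit theorem in the full cube -/

/-- The law of an i.i.d. sequence of pairs `(uᵢ, vᵢ)` of independent uniform variables. -/
noncomputable def pairSeq : Measure (ℕ → ℝ × ℝ) :=
  Measure.infinitePi (fun _ => unifOne.prod unifOne)

instance : IsProbabilityMeasure pairSeq := by unfold pairSeq; infer_instance

/-- The centred and normalised squared distance `n^{-1/2} (‖u - v‖₂² - 2n/3)`. -/
noncomputable def normSq (n : ℕ) (z : (Fin n → ℝ) × (Fin n → ℝ)) : ℝ :=
  (√n)⁻¹ * (∑ i, (z.1 i - z.2 i) ^ 2 - n * (2 / 3))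

lemma measurable_normSq (n : ℕ) : Measurable (normSq n) := by
  unfold normSq; fun_prop

/-- The first `n` terms of the sequence of pairs, read as a pair of vectors, are two independent
uniform points of the cube. -/
lemma measurePreserving_pairSeq (n : ℕ) :
    MeasurePreserving (fun (ω : ℕ → ℝ × ℝ) => ((fun i : Fin n => (ω i).1),
      (fun i : Fin n => (ω i).2))) pairSeq ((unifCube n).prod (unifCube n)) := by
  have h1 : MeasurePreserving (fun (ω : ℕ → ℝ × ℝ) (i : Fin n) => ω i) pairSeq
      (Measure.pi fun _ : Fin n => unifOne.prod unifOne) := by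
    refine ⟨by fun_prop, ?_⟩
    rw [pairSeq, ← Measure.infinitePi_eq_pi]
    exact Measure.map_infinitePi_infinitePi_of_inj (f := fun i : Fin n => (i : ℕ))
      (P := fun _ : ℕ => unifOne.prod unifOne) Fin.val_injective
  have h2 := measurePreserving_arrowProdEquivProdArrow ℝ ℝ (Fin n)
    (fun _ => unifOne) (fun _ => unifOne)
  rw [unifCube_eq_pi]
  exact h2.comp h1

lemma normSq_pairSeq (n : ℕ) (ω : ℕ → ℝ × ℝ) :
    normSq n ((fun i : Fin n => (ω i).1), (fun i : Fin n => (ω i).2))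
      = (√n)⁻¹ * (∑ k ∈ Finset.range n, ((ω k).1 - (ω k).2) ^ 2 - n * (2 / 3)) := by
  simp only [normSq]
  rw [Finset.sum_range (fun k => ((ω k).1 - (ω k).2) ^ 2)]

lemma iIndep_sq_diff :
    iIndepFun (fun (k : ℕ) (ω : ℕ → ℝ × ℝ) => ((ω k).1 - (ω k).2) ^ 2) pairSeq :=
  iIndepFun_infinitePi (P := fun _ : ℕ => unifOne.prod unifOne)
    (X := fun _ (z : ℝ × ℝ) => (z.1 - z.2) ^ 2) (fun _ => by fun_prop)

lemma eval_pairSeq (k : ℕ) :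
    MeasurePreserving (fun ω : ℕ → ℝ × ℝ => ω k) pairSeq (unifOne.prod unifOne) :=
  measurePreserving_eval_infinitePi (fun _ : ℕ => unifOne.prod unifOne) k

lemma identDistrib_sq_diff (k : ℕ) :
    IdentDistrib (fun ω : ℕ → ℝ × ℝ => ((ω k).1 - (ω k).2) ^ 2)
      (fun z : ℝ × ℝ => (z.1 - z.2) ^ 2) pairSeq (unifOne.prod unifOne) := by
  have h : IdentDistrib (fun ω : ℕ → ℝ × ℝ => ω k) id pairSeq (unifOne.prod unifOne) :=
    ⟨(measurable_pi_apply k).aemeasurable, aemeasurable_id, by rw [(eval_pairSeq k).map_eq, Measure.map_id]⟩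
  exact h.comp (u := fun z : ℝ × ℝ => (z.1 - z.2) ^ 2) (by fun_prop)

lemma integral_eq_of_measurePreserving {α β : Type*} [MeasurableSpace α] [MeasurableSpace β]
    {μ : Measure α} {ν : Measure β} {φ : α → β} (h : MeasurePreserving φ μ ν) (g : β → ℝ)
    (hg : Measurable g) : ∫ y, g y ∂ν = ∫ x, g (φ x) ∂μ := by
  rw [← h.map_eq, integral_map h.aemeasurable hg.aestronglyMeasurable]

lemma integral_normSq_sq {n : ℕ} (hn : n ≠ 0) :
    Integrable (fun z => normSq n z ^ 2) ((unifCube n).prod (unifCube n)) ∧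
    ∫ z, normSq n z ^ 2 ∂((unifCube n).prod (unifCube n)) = 28 / 45 := by
  have hmp := measurePreserving_pairSeq n
  have hmem : ∀ k : ℕ, MemLp (fun ω : ℕ → ℝ × ℝ => ((ω k).1 - (ω k).2) ^ 2) 2 pairSeq :=
    fun k => (identDistrib_sq_diff k).memLp_iff.2 (memLp_sq_diff 2)
  have hsum : MemLp (fun ω : ℕ → ℝ × ℝ => ∑ k ∈ Finset.range n, ((ω k).1 - (ω k).2) ^ 2) 2
      pairSeq := memLp_finsetSum _ fun k _ => hmem k
  have hmean : ∫ ω, ∑ k ∈ Finset.range n, ((ω k).1 - (ω k).2) ^ 2 ∂pairSeq = n * (2 / 3) := by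
    rw [integral_finsetSum _ fun k _ => (hmem k).integrable (by norm_num)]
    simp [fun k => (identDistrib_sq_diff k).integral_eq, mean_sq_diff]
  have hvar : Var[fun ω : ℕ → ℝ × ℝ => ∑ k ∈ Finset.range n, ((ω k).1 - (ω k).2) ^ 2; pairSeq]
      = n * (28 / 45) := by
    have h := IndepFun.variance_sum (μ := pairSeq) (s := Finset.range n)
      (X := fun (k : ℕ) (ω : ℕ → ℝ × ℝ) => ((ω k).1 - (ω k).2) ^ 2) (fun k _ => hmem k)
      (fun i _ j _ hij => iIndep_sq_diff.indepFun hij)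
    rw [Finset.sum_fn] at h
    rw [h]
    simp [fun k => (identDistrib_sq_diff k).variance_eq, var_sq_diff]
  rw [variance_eq_integral hsum.aemeasurable, hmean] at hvar
  have hn' : (0 : ℝ) < n := by positivity
  constructor
  · rw [← hmp.integrable_comp ((measurable_normSq n).pow_const 2).aestronglyMeasurable]
    simp only [Function.comp_def, normSq_pairSeq, mul_pow]
    exact ((hsum.sub (memLp_const _)).integrable_sq).const_mul _
  · rw [integral_eq_of_measurePreserving hmp _ ((measurable_normSq n).pow_const 2)]
    simp only [normSq_pairSeq, mul_pow]
    rw [integral_const_mul, hvar, inv_pow, Real.sq_sqrt hn'.le]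
    field_simp

/-- The central limit theorem for `‖u - v‖₂²`, with `u`, `v` uniform in the full cube. The factor
`(2 √(2/3))⁻¹` is the derivative of the square root at `2/3`, so that the variance becomes
`28/45 * 3/8 = 7/30`. -/
lemma clt_cube (f : BoundedContinuousFunction ℝ ℝ) :
    Tendsto (fun n : ℕ => ∫ z, f ((2 * √(2 / 3))⁻¹ * normSq n z)
      ∂((unifCube n).prod (unifCube n))) atTop
      (𝓝 (∫ x, f x ∂(gaussianReal 0 (7 / 30 : NNReal)))) := by
  set b : ℝ := (2 * √(2 / 3))⁻¹ with hb
  have hb2 : b ^ 2 = 3 / 8 := by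
    rw [hb, inv_pow, mul_pow, Real.sq_sqrt (by norm_num)]; norm_num
  have h0 : Var[fun ω : ℕ → ℝ × ℝ => ((ω 0).1 - (ω 0).2) ^ 2; pairSeq] = 28 / 45 := by
    rw [(identDistrib_sq_diff 0).variance_eq, var_sq_diff]
  have hm : ∫ ω, ((ω 0).1 - (ω 0).2) ^ 2 ∂pairSeq = 2 / 3 := by
    rw [(identDistrib_sq_diff 0).integral_eq, mean_sq_diff]
  have key := tendstoInDistribution_inv_sqrt_mul_sum_sub (P := pairSeq)
    (X := fun (k : ℕ) (ω : ℕ → ℝ × ℝ) => ((ω k).1 - (ω k).2) ^ 2)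
    (Y := id) (P' := gaussianReal 0
      (Var[fun ω : ℕ → ℝ × ℝ => ((ω 0).1 - (ω 0).2) ^ 2; pairSeq]).toNNReal)
    HasLaw.id ((identDistrib_sq_diff 0).memLp_iff.2 (memLp_sq_diff 2)) iIndep_sq_diff
    (fun i => (identDistrib_sq_diff i).trans (identDistrib_sq_diff 0).symm)
  have key2 := (ProbabilityMeasure.tendsto_iff_forall_integral_tendsto.1 key.tendsto)
    (f.compContinuous ⟨fun x => b * x, by fun_prop⟩)
  have hg : (gaussianReal 0 (28 / 45 : ℝ).toNNReal).map (b * ·)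
      = gaussianReal 0 (7 / 30 : NNReal) := by
    rw [gaussianReal_map_const_mul]
    congr 1
    · simp
    · ext
      simp [hb2]
      norm_num
  convert key2 using 2
  · rename_i n
    have hmp := measurePreserving_pairSeq n
    rw [integral_eq_of_measurePreserving hmp (fun z => f (b * normSq n z))
      (f.continuous.measurable.comp ((measurable_normSq n).const_mul b))]
    refine Eq.trans ?_ (integral_map (key.forall_aemeasurable n)
      (BoundedContinuousFunction.continuous _).aestronglyMeasurable).symm
    simp [normSq_pairSeq, hm]
  · simp only [ProbabilityMeasure.coe_mk, Measure.map_id, h0]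
    rw [← hg, integral_map (by fun_prop) f.continuous.aestronglyMeasurable]
    simp

/-! ### Comparison of the boundary with the full cube -/

/-- Deterministic delta method. Here `q` stands for the squared distance of the modified vectors,
`q'` for that of the original ones, and `w` for the normalised version of `q'`. The error is that of
the quadratic Taylor bound for the square root at `2/3`, plus the effect of `|q - q'| ≤ 8`. -/
lemma abs_sqrt_linearize {n : ℕ} (hn : n ≠ 0) {q q' w : ℝ} (hq : 0 ≤ q) (hqq : |q - q'| ≤ 8)
    (hw : w = (√n)⁻¹ * (q' - n * (2 / 3))) :
    |√n * ((n : ℝ) ^ (-(1 / 2) : ℝ) * √q - √(2 / 3)) - (2 * √(2 / 3))⁻¹ * w|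
      ≤ 136 * (w ^ 2 + 1) / √n := by
  have hn0 : (1 : ℝ) ≤ n := by exact_mod_cast Nat.one_le_iff_ne_zero.2 hn
  have hpow : (n : ℝ) ^ (-(1 / 2) : ℝ) = (√n)⁻¹ := by
    rw [Real.rpow_neg (by positivity), ← Real.sqrt_eq_rpow]
  rw [hpow]
  set m : ℝ := √n with hm
  have hm1 : 1 ≤ m := Real.one_le_sqrt.2 hn0
  have hmsq : m ^ 2 = n := Real.sq_sqrt (by positivity)
  have hm0 : 0 < m := by positivity
  set c : ℝ := √(2 / 3) with hc
  have hc2 : c ^ 2 = 2 / 3 := Real.sq_sqrt (by norm_num)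
  have hcl : 4 / 5 ≤ c := Real.le_sqrt_of_sq_le (by norm_num)
  have hc0 : 0 < c := by linarith
  set r : ℝ := m⁻¹ * √q with hr
  have hr0 : 0 ≤ r := by positivity
  have hr2 : r ^ 2 * m ^ 2 = q := by
    rw [hr, mul_pow, Real.sq_sqrt hq]; field_simp
  -- `W` is the normalised version of `q`
  set W : ℝ := m * (r ^ 2 - c ^ 2) with hW
  have hWw : |W - w| ≤ 8 / m := by
    have : W - w = (q - q') / m := by
      rw [hW, hw, hc2, ← hr2, ← hmsq]; field_simp; ring
    rw [this, abs_div, abs_of_pos hm0]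
    gcongr
  have hid : m * (r - c) - (2 * c)⁻¹ * w = -(m * (r - c) ^ 2 / (2 * c)) + (W - w) / (2 * c) := by
    rw [hW]; field_simp; ring
  have h1 : m * (r - c) ^ 2 / (2 * c) ≤ W ^ 2 / m := by
    rw [div_le_div_iff₀ (by positivity) hm0, hW]
    have : 1 ≤ (r + c) ^ 2 * (2 * c) := by nlinarith [mul_nonneg hr0 hc0.le, sq_nonneg r]
    nlinarith [mul_nonneg (sq_nonneg (m * (r - c))) (sub_nonneg.2 this)]
  have h2 : |(W - w) / (2 * c)| ≤ 8 / m := by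
    rw [abs_div, abs_of_pos (by positivity : 0 < 2 * c)]
    exact (div_le_self (abs_nonneg _) (by linarith)).trans hWw
  have h8 : 8 / m ≤ 8 := div_le_self (by norm_num) hm1
  have h3 : W ^ 2 ≤ 2 * w ^ 2 + 128 := by
    have h64 : (W - w) ^ 2 ≤ 8 ^ 2 := sq_le_sq' (by linarith [(abs_le.1 hWw).1])
      (by linarith [(abs_le.1 hWw).2])
    nlinarith [sq_nonneg (W - 2 * w)]
  have h4 : 0 ≤ m * (r - c) ^ 2 / (2 * c) := by positivity
  calc |m * (r - c) - (2 * c)⁻¹ * w|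
      ≤ m * (r - c) ^ 2 / (2 * c) + |(W - w) / (2 * c)| := by
        rw [hid]
        refine (abs_add_le _ _).trans ?_
        rw [abs_neg, abs_of_nonneg h4]
    _ ≤ W ^ 2 / m + 8 / m := add_le_add h1 h2
    _ = (W ^ 2 + 8) / m := by ring
    _ ≤ 136 * (w ^ 2 + 1) / m := by
        gcongr
        nlinarith [sq_nonneg w]

/-- Replacing one coordinate of `u` and one of `v` changes `‖u - v‖₂²` by at most `8`. -/
lemma abs_sum_replace_le {n : ℕ} {u v : Fin n → ℝ} {k l : Fin n} {s t : ℝ}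
    (hu : ∀ i, |u i| ≤ 1) (hv : ∀ i, |v i| ≤ 1) (hs : |s| ≤ 1) (ht : |t| ≤ 1) :
    |∑ i, (Function.update u k s i - Function.update v l t i) ^ 2 - ∑ i, (u i - v i) ^ 2| ≤ 8 := by
  have hb : ∀ a b a' b' : ℝ, |a| ≤ 1 → |b| ≤ 1 → |a'| ≤ 1 → |b'| ≤ 1 →
      |(a - b) ^ 2 - (a' - b') ^ 2| ≤ 4 := by
    intro a b a' b' h1 h2 h3 h4
    rw [abs_le] at *
    constructor <;> nlinarith
  rw [← Finset.sum_sub_distrib]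
  calc |∑ i, ((Function.update u k s i - Function.update v l t i) ^ 2 - (u i - v i) ^ 2)|
      ≤ ∑ i, |(Function.update u k s i - Function.update v l t i) ^ 2 - (u i - v i) ^ 2| :=
        Finset.abs_sum_le_sum_abs _ _
    _ ≤ ∑ i, ((if i = k then 4 else 0) + (if i = l then 4 else 0) : ℝ) := by
        refine Finset.sum_le_sum fun i _ => ?_
        have hs' : |Function.update u k s i| ≤ 1 := by
          rw [Function.update_apply]; split_ifs <;> simp [*]
        have ht' : |Function.update v l t i| ≤ 1 := by
          rw [Function.update_apply]; split_ifs <;> simp [*]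
        have h4 := hb _ _ _ _ hs' ht' (hu i) (hv i)
        by_cases hk : i = k
        · rw [if_pos hk]; split_ifs <;> linarith
        · by_cases hl : i = l
          · rw [if_neg hk, if_pos hl]; linarith
          · simp [hk, hl]
    _ = 8 := by
        rw [Finset.sum_add_distrib]; simp; norm_num

/-- The rescaled distance `√n (n^{-1/2} ‖x - y‖₂ - √(2/3))`. -/
noncomputable def scaledDist (n : ℕ) (z : (Fin n → ℝ) × (Fin n → ℝ)) : ℝ :=
  √n * ((n : ℝ) ^ (-(1 / 2) : ℝ) * enorm2 (z.1 - z.2) - √(2 / 3))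

lemma measurable_scaledDist (n : ℕ) : Measurable (scaledDist n) := by
  unfold scaledDist enorm2; fun_prop

instance (n : ℕ) [NeZero n] : IsProbabilityMeasure (coneBoundaryCube n) :=
  Measure.isProbabilityMeasure_map (measurable_replaceCoord n).aemeasurable

/-- Coupling bound: passing from the cone measure to the uniform measure on the cube, and from the
distance to the linearised squared distance, costs `O(n^{-1/2})` for a Lipschitz test function. -/
lemma abs_integral_sub_le {n : ℕ} [NeZero n] {f : ℝ → ℝ} {L : NNReal} (hf : LipschitzWith L f)
    {C : ℝ} (hC : ∀ x y, dist (f x) (f y) ≤ C) :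
    |∫ z, f (scaledDist n z) ∂((coneBoundaryCube n).prod (coneBoundaryCube n))
      - ∫ z, f ((2 * √(2 / 3))⁻¹ * normSq n z) ∂((unifCube n).prod (unifCube n))|
      ≤ L * (136 * (28 / 45 + 1)) / √n := by
  have hn : n ≠ 0 := NeZero.ne n
  set B := (unifFin n).prod unifSign with hB
  set M := ((unifCube n).prod B).prod ((unifCube n).prod B) with hM
  have hfm : Measurable f := hf.continuous.measurable
  have hrep : MeasurePreserving (replaceCoord n) ((unifCube n).prod B) (coneBoundaryCube n) :=
    ⟨measurable_replaceCoord n, rfl⟩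
  have mp1 : MeasurePreserving (Prod.map (replaceCoord n) (replaceCoord n)) M
      ((coneBoundaryCube n).prod (coneBoundaryCube n)) := hrep.prod hrep
  have mpf : MeasurePreserving (Prod.fst) ((unifCube n).prod B) (unifCube n) :=
    measurePreserving_fst
  have mp2 : MeasurePreserving (Prod.map Prod.fst Prod.fst) M
      ((unifCube n).prod (unifCube n)) := mpf.prod mpf
  obtain ⟨hint, hval⟩ := integral_normSq_sq hn
  have hint' : Integrable (fun q => normSq n (Prod.map Prod.fst Prod.fst q) ^ 2) M :=
    (mp2.integrable_comp ((measurable_normSq n).pow_const 2).aestronglyMeasurable).2 hint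
  have hval' : ∫ q, normSq n (Prod.map Prod.fst Prod.fst q) ^ 2 ∂M = 28 / 45 := by
    rw [← hval, integral_eq_of_measurePreserving mp2 _ ((measurable_normSq n).pow_const 2)]
  have hbd : ∀ g : ((Fin n → ℝ) × Fin n × ℝ) × ((Fin n → ℝ) × Fin n × ℝ) → ℝ, Measurable g →
      Integrable (fun q => f (g q)) M := by
    intro g hg
    refine Integrable.of_bound (hfm.comp hg).aestronglyMeasurable (‖f 0‖ + C)
      (ae_of_all _ fun a => ?_)
    have h := hC (g a) 0
    rw [dist_eq_norm] at h
    have := norm_sub_norm_le (f (g a)) (f 0)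
    linarith
  have hg1 := (measurable_scaledDist n).comp mp1.measurable
  have hg2 := ((measurable_normSq n).const_mul (2 * √(2 / 3))⁻¹).comp mp2.measurable
  rw [integral_eq_of_measurePreserving mp1 (fun z => f (scaledDist n z))
      (hfm.comp (measurable_scaledDist n)),
    integral_eq_of_measurePreserving mp2 (fun z => f ((2 * √(2 / 3))⁻¹ * normSq n z))
      (hfm.comp ((measurable_normSq n).const_mul _)), ← Real.norm_eq_abs]
  refine (congrArg norm (integral_sub (hbd _ hg1) (hbd _ hg2))).symm.trans_le ?_
  have hae : ∀ᵐ q ∂((unifCube n).prod B), (∀ i, |q.1 i| ≤ 1) ∧ |q.2.2| ≤ 1 := by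
    have h1 := mpf.quasiMeasurePreserving.ae (ae_abs_le_unifCube n)
    have h2 := ((Measure.quasiMeasurePreserving_snd (μ := unifFin n) (ν := unifSign)).comp
      (Measure.quasiMeasurePreserving_snd (μ := unifCube n) (ν := B))).ae ae_abs_le_unifSign
    filter_upwards [h1, h2] with q h1 h2 using ⟨h1, h2⟩
  have hae1 := (Measure.quasiMeasurePreserving_fst (μ := (unifCube n).prod B)
    (ν := (unifCube n).prod B)).ae hae
  have hae2 := (Measure.quasiMeasurePreserving_snd (μ := (unifCube n).prod B)
    (ν := (unifCube n).prod B)).ae hae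
  have hpt : ∀ᵐ q ∂M, ‖f (scaledDist n (Prod.map (replaceCoord n) (replaceCoord n) q))
      - f ((2 * √(2 / 3))⁻¹ * normSq n (Prod.map Prod.fst Prod.fst q))‖
      ≤ L * (136 * (normSq n (Prod.map Prod.fst Prod.fst q) ^ 2 + 1) / √n) := by
    filter_upwards [hae1, hae2] with q h1 h2
    refine (hf.norm_sub_le _ _).trans ?_
    refine mul_le_mul_of_nonneg_left ?_ L.2
    rw [Real.norm_eq_abs]
    exact abs_sqrt_linearize hn (Finset.sum_nonneg fun i _ => sq_nonneg _)
      (abs_sum_replace_le h1.1 h2.1 h1.2 h2.2) rfl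
  refine (norm_integral_le_of_norm_le ?_ hpt).trans_eq ?_
  · exact (((hint'.add (integrable_const 1)).const_mul 136).div_const _).const_mul _
  · rw [integral_const_mul, integral_div, integral_const_mul,
      integral_add hint' (integrable_const 1), hval']
    simp
    ring

/-! ### The limit theorem on the boundary -/

/-- **CLT for the distance of two random points on the boundary of the cube `∂B_∞^n`.** -/
theorem clt_dist_cube_boundary
    {Ω : Type*} [MeasurableSpace Ω] (μ : Measure Ω) [IsProbabilityMeasure μ]
    (X Y : (n : ℕ) → Ω → (Fin n → ℝ))
    (hIndep : ∀ n, 2 ≤ n → IndepFun (X n) (Y n) μ)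
    (hX : ∀ n, 2 ≤ n → Measure.map (X n) μ = coneBoundaryCube n)
    (hY : ∀ n, 2 ≤ n → Measure.map (Y n) μ = coneBoundaryCube n) :
    ∀ f : BoundedContinuousFunction ℝ ℝ,
      Tendsto
        (fun n : ℕ => ∫ ω, f (Real.sqrt n *
          ((n : ℝ) ^ (-(1 / 2) : ℝ) * enorm2 (X n ω - Y n ω) - Real.sqrt (2 / 3))) ∂μ)
        atTop
        (𝓝 (∫ x, f x ∂(gaussianReal 0 (7 / 30 : NNReal)))) := by
  intro f
  -- the cone measure is a probability measure only for `n ≠ 0`, whence the shift of the index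
  rw [← tendsto_add_atTop_iff_nat 2]
  have hlaw : ∀ (n : ℕ) (g : ℝ → ℝ), Measurable g →
      ∫ ω, g (scaledDist (n + 2) (X (n + 2) ω, Y (n + 2) ω)) ∂μ
        = ∫ z, g (scaledDist (n + 2) z)
          ∂((coneBoundaryCube (n + 2)).prod (coneBoundaryCube (n + 2))) := by
    intro n g hg
    have hn : 2 ≤ n + 2 := by omega
    -- a map which is not a.e. measurable has pushforward `0`
    have hXm : AEMeasurable (X (n + 2)) μ := AEMeasurable.of_map_ne_zero (by
      rw [hX _ hn]; exact IsProbabilityMeasure.ne_zero _)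
    have hYm : AEMeasurable (Y (n + 2)) μ := AEMeasurable.of_map_ne_zero (by
      rw [hY _ hn]; exact IsProbabilityMeasure.ne_zero _)
    have h := (indepFun_iff_map_prod_eq_prod_map_map hXm hYm).1 (hIndep _ hn)
    rw [hX _ hn, hY _ hn] at h
    rw [← h]
    exact (integral_map (hXm.prodMk hYm)
      (hg.comp (measurable_scaledDist _)).aestronglyMeasurable).symm
  let κ : ℕ → ProbabilityMeasure ℝ := fun n =>
    ⟨((coneBoundaryCube (n + 2)).prod (coneBoundaryCube (n + 2))).map (scaledDist (n + 2)),
      Measure.isProbabilityMeasure_map (measurable_scaledDist _).aemeasurable⟩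
  let γ : ProbabilityMeasure ℝ := ⟨gaussianReal 0 (7 / 30 : NNReal), inferInstance⟩
  have hκ : ∀ (n : ℕ) (g : ℝ → ℝ), Measurable g → ∫ x, g x ∂(κ n : Measure ℝ)
      = ∫ z, g (scaledDist (n + 2) z)
          ∂((coneBoundaryCube (n + 2)).prod (coneBoundaryCube (n + 2))) := fun n g hg =>
    integral_map (measurable_scaledDist _).aemeasurable hg.aestronglyMeasurable
  suffices hlim : Tendsto κ atTop (𝓝 γ) by
    refine ((ProbabilityMeasure.tendsto_iff_forall_integral_tendsto.1 hlim) f).congr fun n => ?_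
    rw [hκ n f f.continuous.measurable, ← hlaw n f f.continuous.measurable]
    rfl
  -- for Lipschitz test functions the comparison with the full cube is quantitative
  rw [tendsto_iff_forall_lipschitz_integral_tendsto]
  rintro g ⟨C, hC⟩ ⟨L, hL⟩
  have hcube : Tendsto (fun n : ℕ => ∫ z, g ((2 * √(2 / 3))⁻¹ * normSq (n + 2) z)
      ∂((unifCube (n + 2)).prod (unifCube (n + 2)))) atTop (𝓝 (∫ x, g x ∂(γ : Measure ℝ))) :=
    (tendsto_add_atTop_iff_nat 2).2 (clt_cube
      { toFun := g, continuous_toFun := hL.continuous, map_bounded' := ⟨C, hC⟩ })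
  have hsqrt : Tendsto (fun n : ℕ => (L : ℝ) * (136 * (28 / 45 + 1)) / √((n + 2 : ℕ) : ℝ))
      atTop (𝓝 0) :=
    (tendsto_add_atTop_iff_nat 2).2 (tendsto_const_nhds.div_atTop
      (Real.tendsto_sqrt_atTop.comp tendsto_natCast_atTop_atTop))
  have hdiff : Tendsto (fun n : ℕ => ∫ x, g x ∂(κ n : Measure ℝ)
      - ∫ z, g ((2 * √(2 / 3))⁻¹ * normSq (n + 2) z)
        ∂((unifCube (n + 2)).prod (unifCube (n + 2)))) atTop (𝓝 0) := by
    refine squeeze_zero_norm (fun n => ?_) hsqrt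
    rw [hκ n g hL.continuous.measurable]
    exact abs_integral_sub_le hL hC
  simpa using hdiff.add hcube
end

section
/- For each n ≥ 2 let X⁽ⁿ⁾ and Y⁽ⁿ⁾ be independent random vectors, each uniformly distributed on the unit Euclidean sphere S^{n−1} ⊂ ℝ^n. Then √(2n) · ( ‖X⁽ⁿ⁾ − Y⁽ⁿ⁾‖₂ − √2 ) converges in distribution, as n → ∞, to a standard Gaussian N(0,1). Consequently, ( ‖X⁽ⁿ⁾ − Y⁽ⁿ⁾‖₂ − E‖X⁽ⁿ⁾ − Y⁽ⁿ⁾‖₂ ) / √(Var ‖X⁽ⁿ⁾ − Y⁽ⁿ⁾‖₂) also converges in distribution to N(0,1). -/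
/-!
Write `T = ⟨X, Y⟩`, so that `‖X - Y‖ = √(2 - 2T)` almost surely. Adjoin a standard Gaussian vector
`G` in `ℝ^n` independent of `(X, Y)`. Then `T ‖G‖` has law exactly `N(0,1)`
(`IsUniformSphere.map_mul_enorm2`): conditionally on `Y` and `G`, rotation invariance of `X` lets
`‖G‖ Y` be replaced by `G`, a vector of the same length, and `⟨X, G⟩` is `N(0,1)` conditionally on
the unit vector `X`. Uniqueness of the invariant measure on the sphere is not needed.

Comparing moments of `T ‖G‖` with those of `N(0,1)` gives `E T² = 1/n` and `E T⁴ = O(1/n²)`, and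
`‖G‖²` has mean `n` and variance `O(n)`. A second-order expansion of the square root then shows that
`Z = √(2n) (‖X - Y‖ - √2)` satisfies `E (Z + T ‖G‖)² = O(1/n)` (`integral_sq_error_le`).

Thus `Z` is `L²`-close to an exact `N(0,1)` variable `W = -T ‖G‖`. This yields convergence of
integrals of bounded Lipschitz functions, hence convergence in distribution
(`tendsto_integral_of_L2`), and also `E Z → 0` and `Var Z → 1`, so that the standardization of `Z`,
which is also that of `‖X - Y‖`, is `L²`-close to `W`
(`tendsto_integral_standardized_of_L2`).
-/

open MeasureTheory ProbabilityTheory Real Filter Topology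

/-- `ν` is the uniform (rotation-invariant) probability measure on the unit Euclidean
sphere `S^{n-1} ⊆ ℝ^n`. -/
def IsUniformSphere {n : ℕ} (ν : Measure (Fin n → ℝ)) : Prop :=
  IsProbabilityMeasure ν ∧ ν {x | enorm2 x = 1} = 1 ∧
    ∀ L : (Fin n → ℝ) ≃ₗ[ℝ] (Fin n → ℝ),
      (∀ x, enorm2 (L x) = enorm2 x) → Measure.map L ν = ν

/-! ### Convergence to the Gaussian from `L²` approximation -/

theorem integral_lin_comb {Ω : Type*} [MeasurableSpace Ω] {P : Measure Ω} {A B C D : Ω → ℝ}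
    (hA : Integrable A P) (hB : Integrable B P) (hC : Integrable C P) (hD : Integrable D P)
    (a b c d : ℝ) :
    ∫ ω, (a * A ω + b * B ω + (c * C ω + d * D ω)) ∂P
      = a * ∫ ω, A ω ∂P + b * ∫ ω, B ω ∂P + (c * ∫ ω, C ω ∂P + d * ∫ ω, D ω ∂P) := by
  have hAB : Integrable (fun ω => a * A ω + b * B ω) P := (hA.const_mul a).add (hB.const_mul b)
  have hCD : Integrable (fun ω => c * C ω + d * D ω) P := (hC.const_mul c).add (hD.const_mul d)
  rw [integral_add hAB hCD, integral_add (hA.const_mul a) (hB.const_mul b),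
    integral_add (hC.const_mul c) (hD.const_mul d)]
  simp_rw [integral_const_mul]

/-- Cauchy–Schwarz against a function `V` of unit `L²` norm. -/
theorem sq_integral_mul_le {Ω : Type*} [MeasurableSpace Ω] {P : Measure Ω}
    {U V : Ω → ℝ} (hU : MemLp U 2 P) (hV : MemLp V 2 P) (hV1 : ∫ ω, V ω ^ 2 ∂P = 1) :
    (∫ ω, U ω * V ω ∂P) ^ 2 ≤ ∫ ω, U ω ^ 2 ∂P := by
  set a := ∫ ω, U ω * V ω ∂P with ha
  have hUV : Integrable (fun ω => U ω * V ω) P := hU.integrable_mul hV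
  have h : ∫ ω, (U ω - a * V ω) ^ 2 ∂P = ∫ ω, U ω ^ 2 ∂P - a ^ 2 := by
    have e := integral_lin_comb hU.integrable_sq hUV hV.integrable_sq hV.integrable_sq
      1 (-2 * a) (a ^ 2) 0
    rw [← ha, hV1] at e
    calc _ = _ := integral_congr_ae (ae_of_all _ fun ω => by ring)
      _ = _ := e
      _ = _ := by ring
  have := integral_nonneg (μ := P) (f := fun ω => (U ω - a * V ω) ^ 2) (fun ω => sq_nonneg _)
  simp only [h] at this
  linarith

section normal
variable {Ω : Type*} [MeasurableSpace Ω] {P : Measure Ω} {W : Ω → ℝ}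

theorem aemeasurable_of_map_gaussian (h : P.map W = gaussianReal 0 1) : AEMeasurable W P :=
  AEMeasurable.of_map_ne_zero (by rw [h]; exact IsProbabilityMeasure.ne_zero _)

theorem memLp_of_map_gaussian (h : P.map W = gaussianReal 0 1) : MemLp W 2 P := by
  have := memLp_id_gaussianReal' (μ := 0) (v := 1) 2 (by simp)
  rw [← h, memLp_map_measure_iff (by fun_prop) (aemeasurable_of_map_gaussian h)] at this
  exact this

theorem integral_comp_of_map_gaussian (h : P.map W = gaussianReal 0 1) {f : ℝ → ℝ}
    (hf : Continuous f) : ∫ ω, f (W ω) ∂P = ∫ x, f x ∂(gaussianReal 0 1) := by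
  rw [← h, integral_map (aemeasurable_of_map_gaussian h) (by fun_prop)]

theorem integral_sq_gaussian : ∫ x, x ^ 2 ∂(gaussianReal 0 1) = 1 := by
  have := variance_fun_id_gaussianReal (μ := 0) (v := 1)
  rw [variance_eq_integral (by fun_prop)] at this
  simpa using this

theorem integral_of_map_gaussian (h : P.map W = gaussianReal 0 1) : ∫ ω, W ω ∂P = 0 := by
  rw [integral_comp_of_map_gaussian h (f := fun x => x) (by fun_prop)]
  simp

theorem integral_sq_of_map_gaussian (h : P.map W = gaussianReal 0 1) :
    ∫ ω, W ω ^ 2 ∂P = 1 := by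
  rw [integral_comp_of_map_gaussian h (f := fun x => x ^ 2) (by fun_prop), integral_sq_gaussian]

end normal

/-- If `W` has law `N(0,1)`, the `L²` distance from `Z` to `W` controls Lipschitz test functions. -/
theorem abs_integral_lipschitz_sub_le {Ω : Type*} [MeasurableSpace Ω] {P : Measure Ω}
    [IsProbabilityMeasure P] {Z W : Ω → ℝ} (hZ : MemLp Z 2 P)
    (hW : P.map W = gaussianReal 0 1) {f : ℝ → ℝ} {L : NNReal} (hf : LipschitzWith L f) :
    |∫ ω, f (Z ω) ∂P - ∫ x, f x ∂(gaussianReal 0 1)| ≤ L * √(∫ ω, (Z ω - W ω) ^ 2 ∂P) := by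
  have hW2 := memLp_of_map_gaussian hW
  have hd : MemLp (fun ω => Z ω - W ω) 2 P := hZ.sub hW2
  have hi : ∀ {U : Ω → ℝ}, MemLp U 2 P → Integrable (fun ω => f (U ω)) P := by
    intro U hU
    have hU1 : Integrable U P := hU.integrable (by norm_num)
    refine Integrable.mono' (g := fun ω => |f 0| + L * |U ω|)
      ((integrable_const _).add (hU1.abs.const_mul _))
      (hf.continuous.comp_aestronglyMeasurable hU.1) (ae_of_all _ fun ω => ?_)
    have := hf.dist_le_mul (U ω) 0
    simp only [Real.dist_eq, sub_zero] at this
    rw [Real.norm_eq_abs]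
    have h3 := abs_sub_abs_le_abs_sub (f (U ω)) (f 0)
    linarith
  rw [← integral_comp_of_map_gaussian hW hf.continuous, ← integral_sub (hi hZ) (hi hW2)]
  have habs : ∫ ω, |Z ω - W ω| ∂P ≤ √(∫ ω, (Z ω - W ω) ^ 2 ∂P) := by
    apply Real.le_sqrt_of_sq_le
    have := sq_integral_mul_le (P := P) (U := fun ω => |Z ω - W ω|) (V := fun _ => 1) hd.abs
      (memLp_const 1) (by simp)
    simpa using this
  calc |∫ ω, (f (Z ω) - f (W ω)) ∂P| ≤ ∫ ω, |f (Z ω) - f (W ω)| ∂P := abs_integral_le_integral_abs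
    _ ≤ ∫ ω, L * |Z ω - W ω| ∂P := by
        refine integral_mono ((hi hZ).sub (hi hW2)).abs
          ((hd.integrable (by norm_num)).abs.const_mul _) fun ω => ?_
        simpa [Real.dist_eq] using hf.dist_le_mul (Z ω) (W ω)
    _ = L * ∫ ω, |Z ω - W ω| ∂P := integral_const_mul _ _
    _ ≤ _ := by gcongr

/-- Variables at vanishing `L²` distance from variables with law `N(0,1)`, possibly on varying
probability spaces, converge in distribution to `N(0,1)`. -/
theorem tendsto_integral_of_L2 {Ω : ℕ → Type*} [∀ n, MeasurableSpace (Ω n)]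
    {P : ∀ n, Measure (Ω n)} [∀ n, IsProbabilityMeasure (P n)] {Z W : ∀ n, Ω n → ℝ}
    (hZ : ∀ n, MemLp (Z n) 2 (P n)) (hW : ∀ n, (P n).map (W n) = gaussianReal 0 1)
    (h : Tendsto (fun n => ∫ ω, (Z n ω - W n ω) ^ 2 ∂(P n)) atTop (𝓝 0))
    (f : BoundedContinuousFunction ℝ ℝ) :
    Tendsto (fun n => ∫ ω, f (Z n ω) ∂(P n)) atTop (𝓝 (∫ x, f x ∂(gaussianReal 0 1))) := by
  have hm : ∀ n, AEMeasurable (Z n) (P n) := fun n => (hZ n).1.aemeasurable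
  let Q : ℕ → ProbabilityMeasure ℝ := fun n =>
    ⟨(P n).map (Z n), Measure.isProbabilityMeasure_map (hm n)⟩
  let N : ProbabilityMeasure ℝ := ⟨gaussianReal 0 1, inferInstance⟩
  have hQ : Tendsto Q atTop (𝓝 N) := by
    rw [tendsto_iff_forall_lipschitz_integral_tendsto]
    rintro g - ⟨L, hL⟩
    rw [tendsto_iff_dist_tendsto_zero]
    have h0 : Tendsto (fun n => L * √(∫ ω, (Z n ω - W n ω) ^ 2 ∂(P n))) atTop (𝓝 0) := by
      simpa using (h.sqrt).const_mul (L : ℝ)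
    refine squeeze_zero (fun _ => dist_nonneg) (fun n => ?_) h0
    have := abs_integral_lipschitz_sub_le (hZ n) (hW n) hL
    rw [Real.dist_eq]
    simp only [Q, N, ProbabilityMeasure.coe_mk]
    rwa [integral_map (hm n) hL.continuous.aestronglyMeasurable]
  rw [ProbabilityMeasure.tendsto_iff_forall_integral_tendsto] at hQ
  have := hQ f
  simp only [Q, N, ProbabilityMeasure.coe_mk] at this
  refine this.congr fun n => ?_
  rw [integral_map (hm n) f.continuous.aestronglyMeasurable]

/-- `L²` approximation by `N(0,1)` variables forces the means to tend to `0` and the variances to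
`1`, so that the standardized variables are again close to `N(0,1)` variables in `L²`. -/
theorem tendsto_integral_standardized_of_L2 {Ω : ℕ → Type*} [∀ n, MeasurableSpace (Ω n)]
    {P : ∀ n, Measure (Ω n)} [∀ n, IsProbabilityMeasure (P n)] {Z W : ∀ n, Ω n → ℝ}
    (hZ : ∀ n, MemLp (Z n) 2 (P n)) (hW : ∀ n, (P n).map (W n) = gaussianReal 0 1)
    (h : Tendsto (fun n => ∫ ω, (Z n ω - W n ω) ^ 2 ∂(P n)) atTop (𝓝 0))
    (f : BoundedContinuousFunction ℝ ℝ) :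
    Tendsto (fun n => ∫ ω, f ((Z n ω - ∫ ω', Z n ω' ∂(P n)) / √(variance (Z n) (P n))) ∂(P n))
      atTop (𝓝 (∫ x, f x ∂(gaussianReal 0 1))) := by
  have hW2 := fun n => memLp_of_map_gaussian (hW n)
  have hd : ∀ n, MemLp (fun ω => Z n ω - W n ω) 2 (P n) := fun n => (hZ n).sub (hW2 n)
  have hi : ∀ n {U : Ω n → ℝ}, MemLp U 2 (P n) → Integrable U (P n) :=
    fun n U hU => hU.integrable (by norm_num)
  -- a sequence whose squares are dominated by the squared `L²` distance vanishes
  have key : ∀ a : ℕ → ℝ, (∀ n, a n ^ 2 ≤ ∫ ω, (Z n ω - W n ω) ^ 2 ∂(P n)) →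
      Tendsto a atTop (𝓝 0) := fun a ha => by
    refine squeeze_zero_norm (fun n => Real.abs_le_sqrt (ha n)) ?_
    simpa using h.sqrt
  have h1 : Tendsto (fun n => ∫ ω, Z n ω ∂(P n)) atTop (𝓝 0) := by
    refine key _ fun n => ?_
    have := sq_integral_mul_le (hd n) (memLp_const (1 : ℝ)) (by simp)
    simp only [mul_one] at this
    rwa [integral_sub (hi n (hZ n)) (hi n (hW2 n)), integral_of_map_gaussian (hW n),
      sub_zero] at this
  have h2 : Tendsto (fun n => ∫ ω, (Z n ω - W n ω) * W n ω ∂(P n)) atTop (𝓝 0) :=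
    key _ fun n => sq_integral_mul_le (hd n) (hW2 n) (integral_sq_of_map_gaussian (hW n))
  have h3 : Tendsto (fun n => variance (Z n) (P n)) atTop (𝓝 1) := by
    have e : ∀ n, variance (Z n) (P n) = (∫ ω, (Z n ω - W n ω) ^ 2 ∂(P n))
        + 2 * (∫ ω, (Z n ω - W n ω) * W n ω ∂(P n)) + 1 - (∫ ω, Z n ω ∂(P n)) ^ 2 := fun n => by
      have hm : Integrable (fun ω => (Z n ω - W n ω) * W n ω) (P n) :=
        (hd n).integrable_mul (hW2 n)
      have e := integral_lin_comb (hd n).integrable_sq hm (hW2 n).integrable_sq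
        (hW2 n).integrable_sq 1 2 1 0
      rw [integral_sq_of_map_gaussian (hW n)] at e
      rw [variance_eq_sub (hZ n)]
      calc _ = _ := congrArg (· - _) (integral_congr_ae (ae_of_all _ fun ω => by
              simp only [Pi.pow_apply]; ring))
        _ = _ := congrArg (· - _) e
        _ = _ := by ring
    simp_rw [e]
    have := ((h.add (h2.const_mul 2)).add_const 1).sub (h1.pow 2)
    simpa using this
  set s : ℕ → ℝ := fun n => √(variance (Z n) (P n)) with hs
  have hs1 : Tendsto s atTop (𝓝 1) := by simpa using h3.sqrt
  refine tendsto_integral_of_L2 (W := W)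
    (Z := fun n ω => (Z n ω - ∫ ω', Z n ω' ∂(P n)) / s n) (fun n => ?_) hW ?_ f
  · simp_rw [div_eq_mul_inv]
    exact ((hZ n).sub (memLp_const _)).mul_const _
  -- the standardized variable is at squared distance `Var Z / s² + 1 - 2 E[ZW] / s` from `W`
  have e : ∀ n, ∫ ω, ((Z n ω - ∫ ω', Z n ω' ∂(P n)) / s n - W n ω) ^ 2 ∂(P n)
      = variance (Z n) (P n) / s n ^ 2 + 1
        - 2 * ((∫ ω, (Z n ω - W n ω) * W n ω ∂(P n)) + 1) / s n := fun n => by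
    have hm : Integrable (fun ω => (Z n ω - W n ω) * W n ω) (P n) :=
      (hd n).integrable_mul (hW2 n)
    set m := ∫ ω', Z n ω' ∂(P n) with hmdef
    have hc : MemLp (fun ω => Z n ω - m) 2 (P n) := (hZ n).sub (memLp_const _)
    have e := integral_lin_comb hc.integrable_sq (hW2 n).integrable_sq (hi n (hW2 n)) hm
      (1 / s n ^ 2) (1 - 2 / s n) (2 * m / s n) (-2 / s n)
    rw [integral_of_map_gaussian (hW n), integral_sq_of_map_gaussian (hW n)] at e
    rw [variance_eq_integral (hZ n).1.aemeasurable]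
    calc _ = _ := integral_congr_ae (ae_of_all _ fun ω => by ring)
      _ = _ := e
      _ = _ := by ring
  simp_rw [e]
  have := ((h3.div (hs1.pow 2) (by norm_num)).add_const 1).sub
    (((h2.add_const 1).const_mul 2).div hs1 (by norm_num))
  norm_num at this
  exact this

/-! ### The norm of a Gaussian vector -/

/-- The standard Gaussian measure on `ℝ^n`, as a product measure. -/
noncomputable def stdGauss (n : ℕ) : Measure (Fin n → ℝ) := Measure.pi fun _ => gaussianReal 0 1

instance (n : ℕ) : IsProbabilityMeasure (stdGauss n) := by
  unfold stdGauss; infer_instance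

theorem measurable_enorm2 (n : ℕ) : Measurable (enorm2 (n := n)) := by
  unfold enorm2; fun_prop

theorem enorm2_sq {n : ℕ} (x : Fin n → ℝ) : enorm2 x ^ 2 = ∑ i, x i ^ 2 :=
  Real.sq_sqrt (Finset.sum_nonneg fun _ _ => sq_nonneg _)

theorem enorm2_eq_norm {n : ℕ} (x : Fin n → ℝ) : enorm2 x = ‖WithLp.toLp 2 x‖ := by
  simp [enorm2, EuclideanSpace.norm_eq]

/-- The fourth moment of `N(0,1)`; its numerical value plays no role. -/
noncomputable def gaussFourth : ℝ := ∫ x, x ^ 4 ∂(gaussianReal 0 1)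

theorem memLp_sq_gaussian : MemLp (fun x : ℝ => x ^ 2) 2 (gaussianReal 0 1) := by
  rw [memLp_two_iff_integrable_sq (by fun_prop)]
  have := (memLp_id_gaussianReal' (μ := 0) (v := 1) 4 (by simp)).integrable_norm_pow (p := 4)
    (by norm_num)
  refine this.congr (ae_of_all _ fun x => ?_)
  simp only [id, Real.norm_eq_abs]
  rw [← pow_mul, (show Even 4 by decide).pow_abs]

theorem memLp_enorm2_sq (n : ℕ) : MemLp (fun g => enorm2 g ^ 2) 2 (stdGauss n) := by
  simp_rw [enorm2_sq]
  exact memLp_finsetSum (f := fun (i : Fin n) (g : Fin n → ℝ) => g i ^ 2) _ fun i _ =>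
    memLp_sq_gaussian.comp_measurePreserving
      (measurePreserving_eval (fun _ : Fin n => gaussianReal 0 1) i)

theorem integral_enorm2_sq (n : ℕ) : ∫ g, enorm2 g ^ 2 ∂(stdGauss n) = n := by
  simp_rw [enorm2_sq]
  have hp := fun i => measurePreserving_eval (fun _ : Fin n => gaussianReal 0 1) i
  have hintg : ∀ i, Integrable (fun g : Fin n → ℝ => g i ^ 2) (stdGauss n) := fun i =>
    (hp i).integrable_comp_of_integrable (memLp_sq_gaussian.integrable (by norm_num))
  rw [integral_finsetSum _ fun i _ => hintg i]
  have : ∀ i, ∫ g, g i ^ 2 ∂(stdGauss n) = 1 := fun i => by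
    rw [← integral_sq_gaussian, ← (hp i).map_eq, integral_map (hp i).measurable.aemeasurable
      (by fun_prop)]
    rfl
  simp [this]

/-- `‖G‖²` has mean `n` and variance `n · Var(g²)`, so it concentrates around `n`. -/
theorem integral_enorm2_sq_sub_sq_le (n : ℕ) :
    ∫ g, (enorm2 g ^ 2 - n) ^ 2 ∂(stdGauss n) ≤ n * gaussFourth := by
  have h1 : variance (fun g => enorm2 g ^ 2) (stdGauss n)
      = ∫ g, (enorm2 g ^ 2 - n) ^ 2 ∂(stdGauss n) := by
    rw [variance_eq_integral (memLp_enorm2_sq n).1.aemeasurable, integral_enorm2_sq]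
  rw [← h1]
  have h2 := variance_sum_pi (μ := fun _ : Fin n => gaussianReal 0 1)
    (X := fun _ x => x ^ 2) fun _ => memLp_sq_gaussian
  have h3 : (fun g : Fin n → ℝ => enorm2 g ^ 2) = ∑ i, fun g : Fin n → ℝ => g i ^ 2 := by
    ext g; simp [enorm2_sq]
  have h4 : variance (fun x : ℝ => x ^ 2) (gaussianReal 0 1) ≤ gaussFourth := by
    refine (variance_le_expectation_sq memLp_sq_gaussian.1).trans_eq ?_
    refine integral_congr_ae (ae_of_all _ fun x => ?_)
    simp only [Pi.pow_apply]; ring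
  rw [h3, stdGauss, h2]
  simp only [Finset.sum_const, Finset.card_univ, Fintype.card_fin, nsmul_eq_mul]
  gcongr

theorem sq_le_integral_enorm2_four (n : ℕ) :
    (n : ℝ) ^ 2 ≤ ∫ g, enorm2 g ^ 4 ∂(stdGauss n) := by
  have h := variance_nonneg (fun g => enorm2 g ^ 2) (stdGauss n)
  rw [variance_eq_sub (memLp_enorm2_sq n), integral_enorm2_sq] at h
  have : ∫ g, ((fun g => enorm2 g ^ 2) ^ 2) g ∂(stdGauss n) = ∫ g, enorm2 g ^ 4 ∂(stdGauss n) :=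
    integral_congr_ae (ae_of_all _ fun x => by simp only [Pi.pow_apply]; ring)
  linarith

/-! ### The quantitative approximation -/

/-- With `u = √(1 - t)`, the quantity `√(2n) (√(2 - 2t) - √2) + √n t` equals
`-√n (1 - u)²`, while `t² = (1 - u)² (1 + u)²`; and `√n - r = (n - r²) / (√n + r)`. -/
theorem pointwise_bound {n : ℕ} (hn : 1 ≤ n) {t r : ℝ} (ht : |t| ≤ 1) (hr : 0 ≤ r) :
    (√(2 * n) * (√(2 - 2 * t) - √2) - -(t * r)) ^ 2
      ≤ 2 * n * t ^ 4 + 2 / n * (t ^ 2 * (r ^ 2 - n) ^ 2) := by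
  have hn' : (0 : ℝ) < n := by exact_mod_cast hn
  have ht1 := (abs_le.1 ht).2
  obtain ⟨u, hu, hu0⟩ : ∃ u, u = √(1 - t) ∧ 0 ≤ u := ⟨_, rfl, Real.sqrt_nonneg _⟩
  obtain ⟨w, hw, hw0⟩ : ∃ w, w = √(n : ℝ) ∧ 0 < w := ⟨_, rfl, Real.sqrt_pos.2 hn'⟩
  have hu2 : u ^ 2 = 1 - t := by rw [hu, Real.sq_sqrt (by linarith)]
  have hw2 : w ^ 2 = n := by rw [hw, Real.sq_sqrt hn'.le]
  have e1 : √(2 * n) * (√(2 - 2 * t) - √2) = 2 * w * (u - 1) := by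
    rw [show 2 - 2 * t = 2 * (1 - t) by ring, Real.sqrt_mul (by norm_num),
      Real.sqrt_mul (by norm_num), ← hu, ← hw]
    linear_combination (w * (u - 1)) * (Real.sq_sqrt (show (0 : ℝ) ≤ 2 by norm_num))
  have ht' : t = 1 - u ^ 2 := by linarith
  have hA : (2 * w * (u - 1) + w * t) ^ 2 ≤ n * t ^ 4 := by
    rw [ht', ← hw2]
    have : (1 : ℝ) ≤ (1 + u) ^ 4 := one_le_pow₀ (by linarith)
    have h2 : 0 ≤ w ^ 2 * (1 - u) ^ 4 := by positivity
    nlinarith [mul_nonneg h2 (sub_nonneg.2 this)]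
  have hB : (w - r) ^ 2 ≤ (r ^ 2 - n) ^ 2 / n := by
    rw [le_div_iff₀ hn', ← hw2]
    have : w ^ 2 ≤ (w + r) ^ 2 := by gcongr; linarith
    nlinarith [mul_nonneg (sq_nonneg (w - r)) (sub_nonneg.2 this)]
  have hC : t ^ 2 * (w - r) ^ 2 ≤ t ^ 2 * ((r ^ 2 - n) ^ 2 / n) := by gcongr
  rw [e1]
  have hD : 2 / (n : ℝ) * (t ^ 2 * (r ^ 2 - n) ^ 2) = 2 * (t ^ 2 * ((r ^ 2 - n) ^ 2 / n)) := by
    ring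
  rw [hD]
  nlinarith [sq_nonneg ((2 * w * (u - 1) + w * t) + t * (w - r))]

/-- For `T` with law `τ` and an independent Gaussian vector `G` such that `T ‖G‖` is `N(0,1)`, the
variable `√(2n) (√(2 - 2T) - √2)` is within `O(1/√n)` of `-T ‖G‖` in `L²`. The moments of `T` come
from those of `N(0,1)`: `E T² · n = 1` and `E T⁴ · E ‖G‖⁴ = E N⁴` with `E ‖G‖⁴ ≥ n²`. -/
theorem integral_sq_error_le {n : ℕ} (hn : 1 ≤ n) {τ : Measure ℝ} [IsProbabilityMeasure τ]
    (hτ : ∀ᵐ t ∂τ, |t| ≤ 1)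
    (hlaw : (τ.prod (stdGauss n)).map (fun p => p.1 * enorm2 p.2) = gaussianReal 0 1) :
    ∫ p, (√(2 * n) * (√(2 - 2 * p.1) - √2) - -(p.1 * enorm2 p.2)) ^ 2 ∂(τ.prod (stdGauss n))
      ≤ 4 * gaussFourth / n := by
  have hn' : (0 : ℝ) < n := by exact_mod_cast hn
  have hpow : ∀ k : ℕ, Integrable (fun t : ℝ => t ^ k) τ := fun k => by
    refine Integrable.mono' (integrable_const 1) (by fun_prop) ?_
    filter_upwards [hτ] with t ht
    rw [norm_pow]
    exact pow_le_one₀ (norm_nonneg _) ht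
  have h2 : (∫ t, t ^ 2 ∂τ) * n = 1 := by
    rw [← integral_enorm2_sq, ← integral_prod_mul, ← integral_sq_gaussian,
      ← integral_comp_of_map_gaussian hlaw (f := fun x => x ^ 2) (by fun_prop)]
    simp_rw [mul_pow]
  have h4 : (∫ t, t ^ 4 ∂τ) * (∫ g, enorm2 g ^ 4 ∂(stdGauss n)) = gaussFourth := by
    rw [← integral_prod_mul, gaussFourth,
      ← integral_comp_of_map_gaussian hlaw (f := fun x => x ^ 4) (by fun_prop)]
    simp_rw [mul_pow]
  have h4' : (∫ t, t ^ 4 ∂τ) * n ^ 2 ≤ gaussFourth := by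
    rw [← h4]
    exact mul_le_mul_of_nonneg_left (sq_le_integral_enorm2_four n)
      (integral_nonneg fun t => by positivity)
  have hd : Integrable (fun g => (enorm2 g ^ 2 - n) ^ 2) (stdGauss n) :=
    ((memLp_enorm2_sq n).sub (memLp_const _)).integrable_sq
  have i1 : Integrable (fun p : ℝ × (Fin n → ℝ) => 2 * n * p.1 ^ 4) (τ.prod (stdGauss n)) :=
    ((hpow 4).comp_fst _).const_mul _
  have i2 : Integrable (fun p : ℝ × (Fin n → ℝ) => 2 / n * (p.1 ^ 2 * (enorm2 p.2 ^ 2 - n) ^ 2))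
      (τ.prod (stdGauss n)) := ((hpow 2).mul_prod hd).const_mul _
  have hae : ∀ᵐ p ∂(τ.prod (stdGauss n)), |p.1| ≤ 1 :=
    Measure.quasiMeasurePreserving_fst.ae hτ
  calc _ ≤ ∫ p, (2 * n * p.1 ^ 4 + 2 / n * (p.1 ^ 2 * (enorm2 p.2 ^ 2 - n) ^ 2))
        ∂(τ.prod (stdGauss n)) := by
        refine integral_mono_of_nonneg (ae_of_all _ fun p => sq_nonneg _) (i1.add i2) ?_
        filter_upwards [hae] with p hp
        exact pointwise_bound hn hp (Real.sqrt_nonneg _)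
    _ = 2 * n * ∫ t, t ^ 4 ∂τ
        + 2 / n * ((∫ t, t ^ 2 ∂τ) * ∫ g, (enorm2 g ^ 2 - n) ^ 2 ∂(stdGauss n)) := by
        rw [integral_add i1 i2, integral_const_mul, integral_const_mul,
          integral_prod_mul (fun t : ℝ => t ^ 2) fun g => (enorm2 g ^ 2 - n) ^ 2, integral_fun_fst (fun t : ℝ => t ^ 4)]
        simp
    _ ≤ 2 * n * (gaussFourth / n ^ 2) + 2 / n * ((1 / n) * (n * gaussFourth)) := by
        rw [eq_div_of_mul_eq hn'.ne' h2]
        gcongr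
        · rwa [le_div_iff₀ (by positivity)]
        · exact integral_enorm2_sq_sub_sq_le n
    _ = 4 * gaussFourth / n := by field_simp; ring

/-! ### Rotation invariance and the inner product -/

theorem map_dotProduct_stdGauss {n : ℕ} {x : Fin n → ℝ} (hx : enorm2 x = 1) :
    (stdGauss n).map (fun g => x ⬝ᵥ g) = gaussianReal 0 1 := by
  have h := IsGaussian.map_eq_gaussianReal (μ := stdGaussian (EuclideanSpace ℝ (Fin n)))
    (innerSL ℝ (WithLp.toLp 2 x))
  rw [integral_strongDual_stdGaussian, variance_dual_stdGaussian, innerSL_apply_norm,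
    ← enorm2_eq_norm, hx, ← map_pi_eq_stdGaussian, Measure.map_map (by fun_prop) (by fun_prop)] at h
  simp only [one_pow, Real.toNNReal_one] at h
  rw [← h, stdGauss]
  congr 1
  ext g
  simp [dotProduct, PiLp.inner_apply, mul_comm]

/-- A rotation-invariant measure integrates functions of `⟨x, u⟩` to a value that depends only on
the length of `u`: two vectors of equal length are exchanged by a reflection. -/
theorem IsUniformSphere.lintegral_dotProduct_eq {n : ℕ} {ν : Measure (Fin n → ℝ)}
    (hν : IsUniformSphere ν) {u v : Fin n → ℝ} (huv : enorm2 u = enorm2 v)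
    {f : ℝ → ENNReal} (hf : Measurable f) :
    ∫⁻ x, f (x ⬝ᵥ u) ∂ν = ∫⁻ x, f (x ⬝ᵥ v) ∂ν := by
  let e : (Fin n → ℝ) ≃ₗ[ℝ] EuclideanSpace ℝ (Fin n) := (WithLp.linearEquiv 2 ℝ (Fin n → ℝ)).symm
  have he : ∀ x, e x = WithLp.toLp 2 x := fun x => rfl
  let S : EuclideanSpace ℝ (Fin n) ≃ₗᵢ[ℝ] EuclideanSpace ℝ (Fin n) :=
    (ℝ ∙ (e u - e v))ᗮ.reflection
  have hS : S (e u) = e v := Submodule.reflection_sub (by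
    rw [he, he, ← enorm2_eq_norm, ← enorm2_eq_norm, huv])
  let L : (Fin n → ℝ) ≃ₗ[ℝ] (Fin n → ℝ) := e.trans (S.toLinearEquiv.trans e.symm)
  have hL : ∀ x, e (L x) = S (e x) := fun x => by simp [L]
  have hLn : ∀ x, enorm2 (L x) = enorm2 x := fun x => by
    rw [enorm2_eq_norm, enorm2_eq_norm, ← he, ← he, hL, S.norm_map]
  have hin : ∀ x y : Fin n → ℝ, x ⬝ᵥ y = inner ℝ (e x) (e y) := fun x y => by
    simp [he, dotProduct, PiLp.inner_apply, mul_comm]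
  have hLm : Measurable L := (LinearMap.continuous_of_finiteDimensional
    (L : (Fin n → ℝ) →ₗ[ℝ] (Fin n → ℝ))).measurable
  have hm : Measurable fun x : Fin n → ℝ => f (x ⬝ᵥ v) := by
    unfold dotProduct; fun_prop
  conv_rhs => rw [← hν.2.2 L hLn, lintegral_map hm hLm]
  refine lintegral_congr fun x => ?_
  congr 1
  rw [hin, hin, hL, ← hS, S.inner_map_map]

theorem IsUniformSphere.ae_enorm2 {n : ℕ} {ν : Measure (Fin n → ℝ)} (hν : IsUniformSphere ν) :
    ∀ᵐ x ∂ν, enorm2 x = 1 := by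
  have := hν.1
  exact (prob_compl_eq_zero_iff (measurableSet_eq_fun (measurable_enorm2 n) measurable_const)).2
    hν.2.1

/-- The law of `⟨X, Y⟩` when `X` and `Y` are independent with law `ν`. -/
noncomputable def dotLaw {n : ℕ} (ν : Measure (Fin n → ℝ)) : Measure ℝ :=
  (ν.prod ν).map fun p => p.1 ⬝ᵥ p.2

theorem measurable_dot (n : ℕ) :
    Measurable fun p : (Fin n → ℝ) × (Fin n → ℝ) => p.1 ⬝ᵥ p.2 := by
  unfold dotProduct; fun_prop

theorem IsUniformSphere.isProbabilityMeasure_dotLaw {n : ℕ} {ν : Measure (Fin n → ℝ)}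
    (hν : IsUniformSphere ν) : IsProbabilityMeasure (dotLaw ν) := by
  have := hν.1
  exact Measure.isProbabilityMeasure_map (measurable_dot n).aemeasurable

theorem dotProduct_le_one {n : ℕ} {x y : Fin n → ℝ} (hx : enorm2 x = 1) (hy : enorm2 y = 1) :
    |x ⬝ᵥ y| ≤ 1 := by
  have h := abs_real_inner_le_norm (WithLp.toLp 2 y) (WithLp.toLp 2 x)
  rw [← enorm2_eq_norm, ← enorm2_eq_norm, hx, hy, mul_one] at h
  simpa [dotProduct, PiLp.inner_apply, mul_comm] using h

theorem enorm2_sub_eq {n : ℕ} {x y : Fin n → ℝ} (hx : enorm2 x = 1) (hy : enorm2 y = 1) :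
    enorm2 (x - y) = √(2 - 2 * (x ⬝ᵥ y)) := by
  have hx2 := enorm2_sq x
  have hy2 := enorm2_sq y
  rw [enorm2]
  congr 1
  rw [hx] at hx2
  rw [hy] at hy2
  have : ∑ i, (x - y) i ^ 2 = ∑ i, x i ^ 2 + ∑ i, y i ^ 2 - 2 * (x ⬝ᵥ y) := by
    rw [dotProduct, Finset.mul_sum, ← Finset.sum_add_distrib, ← Finset.sum_sub_distrib]
    exact Finset.sum_congr rfl fun i _ => by simp only [Pi.sub_apply]; ring
  rw [this, ← hx2, ← hy2]
  norm_num

theorem IsUniformSphere.ae_prod {n : ℕ} {ν : Measure (Fin n → ℝ)} (hν : IsUniformSphere ν) :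
    ∀ᵐ p ∂(ν.prod ν), enorm2 p.1 = 1 ∧ enorm2 p.2 = 1 := by
  have := hν.1
  exact (Measure.quasiMeasurePreserving_fst.ae hν.ae_enorm2).and
    (Measure.quasiMeasurePreserving_snd.ae hν.ae_enorm2)

theorem IsUniformSphere.ae_dotLaw {n : ℕ} {ν : Measure (Fin n → ℝ)} (hν : IsUniformSphere ν) :
    ∀ᵐ t ∂(dotLaw ν), |t| ≤ 1 := by
  rw [dotLaw, ae_map_iff (measurable_dot n).aemeasurable
    (measurableSet_le (by fun_prop) (by fun_prop))]
  filter_upwards [hν.ae_prod] with p hp using dotProduct_le_one hp.1 hp.2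

/-- If `G` is a standard Gaussian vector independent of `(X, Y)`, then `⟨X, Y⟩ ‖G‖` is exactly
`N(0,1)`: by rotation invariance of `X` it has the law of `⟨X, G⟩`, which is `N(0,1)` given `X`. -/
theorem IsUniformSphere.map_mul_enorm2 {n : ℕ} {ν : Measure (Fin n → ℝ)}
    (hν : IsUniformSphere ν) :
    ((dotLaw ν).prod (stdGauss n)).map (fun p => p.1 * enorm2 p.2) = gaussianReal 0 1 := by
  have := hν.1
  have := hν.isProbabilityMeasure_dotLaw
  have hR := measurable_enorm2 n
  have hdot := measurable_dot n
  have hm : Measurable fun p : ℝ × (Fin n → ℝ) => p.1 * enorm2 p.2 := by fun_prop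
  refine Measure.ext_of_lintegral _ fun f hf => ?_
  rw [lintegral_map hf hm, lintegral_prod_symm _ (by fun_prop)]
  have hinner : ∀ g : Fin n → ℝ,
      ∫⁻ t, f (t * enorm2 g) ∂(dotLaw ν) = ∫⁻ x, f (x ⬝ᵥ g) ∂ν := fun g => by
    rw [dotLaw, lintegral_map (by fun_prop) hdot, lintegral_prod_symm _ (by fun_prop)]
    have hy : ∀ᵐ y ∂ν, ∫⁻ x, f ((x ⬝ᵥ y) * enorm2 g) ∂ν = ∫⁻ x, f (x ⬝ᵥ g) ∂ν := by
      filter_upwards [hν.ae_enorm2] with y hy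
      rw [← hν.lintegral_dotProduct_eq (u := enorm2 g • y) _ hf]
      · simp [dotProduct_smul, mul_comm]
      · rw [enorm2_eq_norm, WithLp.toLp_smul, norm_smul, ← enorm2_eq_norm, hy, mul_one]
        exact abs_of_nonneg (Real.sqrt_nonneg _)
    rw [lintegral_congr_ae hy]
    simp
  simp_rw [hinner]
  rw [lintegral_lintegral_swap (by
    have := hf.comp (hdot.comp measurable_swap)
    exact this.aemeasurable)]
  have hx : ∀ᵐ x ∂ν, ∫⁻ g, f (x ⬝ᵥ g) ∂(stdGauss n) = ∫⁻ z, f z ∂(gaussianReal 0 1) := by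
    filter_upwards [hν.ae_enorm2] with x hx
    rw [← map_dotProduct_stdGauss hx, lintegral_map hf (by unfold dotProduct; fun_prop)]
  rw [lintegral_congr_ae hx]
  simp

/-! ### The limit theorem -/

/-- The distance `‖X - Y‖` has the law of `√(2 - 2⟨X, Y⟩)`, realized on a product space that also
carries a Gaussian vector. -/
theorem identDistrib_dist {Ω : Type*} [MeasurableSpace Ω] {μ : Measure Ω}
    [IsProbabilityMeasure μ] {n : ℕ} {ν : Measure (Fin n → ℝ)} (hν : IsUniformSphere ν)
    {X Y : Ω → Fin n → ℝ} (hXY : IndepFun X Y μ) (hX : μ.map X = ν) (hY : μ.map Y = ν) :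
    IdentDistrib (fun ω => enorm2 (X ω - Y ω))
      (fun p : ℝ × (Fin n → ℝ) => √(2 - 2 * p.1)) μ ((dotLaw ν).prod (stdGauss n)) := by
  have := hν.1
  have := hν.isProbabilityMeasure_dotLaw
  -- a non-measurable map would push `μ` forward to `0`
  have hXm : AEMeasurable X μ :=
    AEMeasurable.of_map_ne_zero (by rw [hX]; exact IsProbabilityMeasure.ne_zero _)
  have hYm : AEMeasurable Y μ :=
    AEMeasurable.of_map_ne_zero (by rw [hY]; exact IsProbabilityMeasure.ne_zero _)
  have hpair : μ.map (fun ω => (X ω, Y ω)) = ν.prod ν := by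
    rw [(indepFun_iff_map_prod_eq_prod_map_map hXm hYm).1 hXY, hX, hY]
  have hd : Measurable fun p : (Fin n → ℝ) × (Fin n → ℝ) => enorm2 (p.1 - p.2) :=
    (measurable_enorm2 n).comp (measurable_fst.sub measurable_snd)
  have hs : Measurable fun t : ℝ => √(2 - 2 * t) := by fun_prop
  have hp : AEMeasurable (fun ω => (X ω, Y ω)) μ := hXm.prodMk hYm
  have hd1 : AEMeasurable (fun ω => enorm2 (X ω - Y ω)) μ := by
    have h := hd.comp_aemeasurable hp
    simpa only [Function.comp_def] using h
  have hd2 : Measurable fun p : ℝ × (Fin n → ℝ) => √(2 - 2 * p.1) := hs.comp measurable_fst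
  refine ⟨hd1, hd2.aemeasurable, ?_⟩
  calc μ.map (fun ω => enorm2 (X ω - Y ω))
      = (ν.prod ν).map fun p => enorm2 (p.1 - p.2) := by
        rw [← hpair, AEMeasurable.map_map_of_aemeasurable hd.aemeasurable hp, Function.comp_def]
    _ = (ν.prod ν).map fun p => √(2 - 2 * (p.1 ⬝ᵥ p.2)) := by
        refine Measure.map_congr ?_
        filter_upwards [hν.ae_prod] with p hp using enorm2_sub_eq hp.1 hp.2
    _ = (dotLaw ν).map fun t => √(2 - 2 * t) := by
        rw [dotLaw, Measure.map_map hs (measurable_dot n)]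
        rfl
    _ = (((dotLaw ν).prod (stdGauss n)).map Prod.fst).map fun t => √(2 - 2 * t) := by
        simp
    _ = ((dotLaw ν).prod (stdGauss n)).map fun p => √(2 - 2 * p.1) := by
        rw [Measure.map_map hs measurable_fst]
        rfl

/-- **Hammersley's CLT for the distance of two random points on the sphere `S^{n-1}`.** -/
theorem clt_dist_sphere
    {Ω : Type*} [MeasurableSpace Ω] (μ : Measure Ω) [IsProbabilityMeasure μ]
    (ν : (n : ℕ) → Measure (Fin n → ℝ)) (hν : ∀ n, 2 ≤ n → IsUniformSphere (ν n))
    (X Y : (n : ℕ) → Ω → (Fin n → ℝ))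
    (hIndep : ∀ n, 2 ≤ n → IndepFun (X n) (Y n) μ)
    (hX : ∀ n, 2 ≤ n → Measure.map (X n) μ = ν n)
    (hY : ∀ n, 2 ≤ n → Measure.map (Y n) μ = ν n) :
    (∀ f : BoundedContinuousFunction ℝ ℝ,
      Tendsto
        (fun n : ℕ => ∫ ω, f (Real.sqrt (2 * n) *
          (enorm2 (X n ω - Y n ω) - Real.sqrt 2)) ∂μ)
        atTop (𝓝 (∫ x, f x ∂(gaussianReal 0 1)))) ∧
    (∀ f : BoundedContinuousFunction ℝ ℝ,
      Tendsto
        (fun n : ℕ => ∫ ω, f ((enorm2 (X n ω - Y n ω) -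
            ∫ ω', enorm2 (X n ω' - Y n ω') ∂μ) /
          Real.sqrt (variance (fun ω' => enorm2 (X n ω' - Y n ω')) μ)) ∂μ)
        atTop (𝓝 (∫ x, f x ∂(gaussianReal 0 1)))) := by
  have hge : ∀ n, 2 ≤ n + 2 := fun n => Nat.le_add_left _ _
  have hu : ∀ n, IsUniformSphere (ν (n + 2)) := fun n => hν _ (hge n)
  have : ∀ n, IsProbabilityMeasure (dotLaw (ν (n + 2))) := fun n =>
    (hu n).isProbabilityMeasure_dotLaw
  let P : ∀ n : ℕ, Measure (ℝ × (Fin (n + 2) → ℝ)) := fun n =>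
    (dotLaw (ν (n + 2))).prod (stdGauss (n + 2))
  have hPprob : ∀ n, IsProbabilityMeasure (P n) := fun n => by
    simp only [P]; infer_instance
  let D : ∀ n : ℕ, ℝ × (Fin (n + 2) → ℝ) → ℝ := fun n p => √(2 - 2 * p.1)
  let c : ℕ → ℝ := fun n => √(2 * ((n + 2 : ℕ) : ℝ))
  let Z : ∀ n : ℕ, ℝ × (Fin (n + 2) → ℝ) → ℝ := fun n p => c n * (D n p - √2)
  let W : ∀ n : ℕ, ℝ × (Fin (n + 2) → ℝ) → ℝ := fun n p => -(p.1 * enorm2 p.2)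
  have hid : ∀ n, IdentDistrib (fun ω => enorm2 (X (n + 2) ω - Y (n + 2) ω)) (D n) μ (P n) :=
    fun n => identDistrib_dist (hu n) (hIndep _ (hge n)) (hX _ (hge n)) (hY _ (hge n))
  have hae : ∀ n, ∀ᵐ p ∂(P n), |p.1| ≤ 1 := fun n =>
    Measure.quasiMeasurePreserving_fst.ae (hu n).ae_dotLaw
  have hD : ∀ n, MemLp (D n) 2 (P n) := fun n => by
    refine MemLp.of_bound (hid n).aemeasurable_snd.aestronglyMeasurable 2 ?_
    filter_upwards [hae n] with p hp
    rw [Real.norm_of_nonneg (Real.sqrt_nonneg _)]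
    refine Real.sqrt_le_iff.2 ⟨by norm_num, ?_⟩
    linarith [(abs_le.1 hp).1]
  have hZ : ∀ n, MemLp (Z n) 2 (P n) := fun n => ((hD n).sub (memLp_const _)).const_mul _
  have hW : ∀ n, (P n).map (W n) = gaussianReal 0 1 := fun n => by
    have hm : Measurable fun p : ℝ × (Fin (n + 2) → ℝ) => p.1 * enorm2 p.2 :=
      measurable_fst.mul ((measurable_enorm2 _).comp measurable_snd)
    have h := gaussianReal_map_neg (μ := 0) (v := 1)
    rw [neg_zero] at h
    conv_rhs => rw [← h, ← (hu n).map_mul_enorm2, Measure.map_map measurable_neg hm]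
    rfl
  have hlim : Tendsto (fun n => ∫ p, (Z n p - W n p) ^ 2 ∂(P n)) atTop (𝓝 0) := by
    refine squeeze_zero (fun n => integral_nonneg fun p => sq_nonneg _)
      (fun n => integral_sq_error_le (by lia) (hu n).ae_dotLaw (hu n).map_mul_enorm2) ?_
    exact (tendsto_const_div_atTop_nhds_zero_nat (4 * gaussFourth)).comp (tendsto_add_atTop_nat 2)
  refine ⟨fun f => ?_, fun f => ?_⟩
  · rw [← tendsto_add_atTop_iff_nat 2]
    refine (tendsto_integral_of_L2 hZ hW hlim f).congr fun n => ?_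
    have hg : Measurable fun d : ℝ => f (c n * (d - √2)) := by fun_prop
    exact ((hid n).comp hg).integral_eq.symm
  · rw [← tendsto_add_atTop_iff_nat 2]
    refine (tendsto_integral_standardized_of_L2 hZ hW hlim f).congr fun n => ?_
    have hc : 0 < c n := Real.sqrt_pos.2 (by positivity)
    have hm : ∫ p, Z n p ∂(P n) = c n * (∫ p, D n p ∂(P n) - √2) := by
      simp only [Z]
      rw [integral_const_mul, integral_sub ((hD n).integrable (by norm_num)) (integrable_const _)]
      simp
    have hv : √(variance (Z n) (P n)) = c n * √(variance (D n) (P n)) := by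
      simp only [Z]
      rw [variance_const_mul, variance_sub_const (hD n).1, Real.sqrt_mul (sq_nonneg _),
        Real.sqrt_sq hc.le]
    rw [hm, hv, (hid n).integral_eq, (hid n).variance_eq]
    have hg : Measurable fun d : ℝ =>
        f ((d - ∫ p, D n p ∂(P n)) / √(variance (D n) (P n))) := by fun_prop
    refine Eq.trans ?_ ((hid n).comp hg).integral_eq.symm
    refine integral_congr_ae (ae_of_all _ fun p => ?_)
    simp only [Z, Function.comp]
    rw [← mul_sub, mul_div_mul_left _ _ hc.ne']
    congr 2
    ring
end

section
/- For each n ≥ 2 let X⁽ⁿ⁾ and Y⁽ⁿ⁾ be independent random vectors uniformly distributed on the unit Euclidean sphere S^{n−1}. Then the expected distance satisfies the asymptotic expansion E[ ‖X⁽ⁿ⁾ − Y⁽ⁿ⁾‖₂ ] = √2 − 1/(4√2 · n) + o(1/n) as n → ∞; i.e. n · ( E[ ‖X⁽ⁿ⁾ − Y⁽ⁿ⁾‖₂ ] − √2 + 1/(4√2 n) ) → 0. -/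
/-!
For unit vectors `x, y` one has `‖x - y‖₂ = √2 · √(1 - t)` with `t = ⟨x, y⟩`, and

`0 ≤ (1 - t/2 - t²/8 - t³/16) - √(1 - t) ≤ t⁴`  for `t ≤ 1` (`sqrt_one_sub_bounds`),

so it suffices to know the first four moments of `t`. For fixed unit `y`, the reflection exchanging
two unit vectors shows that the law of `⟨x, y⟩` under the uniform measure does not depend on `y`
(`integral_dot_eq`). Comparing `y` with `-y` kills the odd moments. Averaging over the coordinate
directions gives `E t² = 1/n`. Comparing `e_i` with `(e_i ± e_j)/√2` gives
`E x_i⁴ = 3 E x_i² x_j²`, and expanding `1 = E (∑ x_i²)²` then yields `E t⁴ = 3 / (n (n + 2))`.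
Hence `∫ ‖x - y‖₂ dν(x)` is within `3√2/n²` of `√2 (1 - 1/(8n)) = √2 - 1/(4√2 n)` for every
unit `y`, and integrating over `y` finishes the proof.
-/

open MeasureTheory ProbabilityTheory Real Filter Topology

/-! ### Taylor bounds for the square root -/

/-- The third Taylor polynomial `p` of `√(1 - t)` at `0`. With `s = √(1 - t)`, the difference `p - s`
equals `(1 - s)⁴ (s² + 4 s + 5) / 16`, while `t⁴ = (1 - s)⁴ (1 + s)⁴`. -/
lemma sqrt_one_sub_bounds {t : ℝ} (h2 : t ≤ 1) :
    √(1 - t) ≤ 1 - t / 2 - t ^ 2 / 8 - t ^ 3 / 16 ∧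
      1 - t / 2 - t ^ 2 / 8 - t ^ 3 / 16 - t ^ 4 ≤ √(1 - t) := by
  obtain ⟨s, hs⟩ : ∃ s, s = √(1 - t) := ⟨_, rfl⟩
  have hs0 : 0 ≤ s := hs ▸ Real.sqrt_nonneg _
  have hss : s ^ 2 = 1 - t := by rw [hs]; exact Real.sq_sqrt (by linarith)
  have ht : t = 1 - s ^ 2 := by linarith
  rw [← hs, ht]
  have h4 : 0 ≤ (1 - s) ^ 4 := by positivity
  constructor
  · have : 0 ≤ (1 - s) ^ 4 * (s ^ 2 + 4 * s + 5) := by positivity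
    nlinarith [this]
  · have : 0 ≤ (1 - s) ^ 4 * (16 * (1 + s) ^ 4 - (s ^ 2 + 4 * s + 5)) := by
      refine mul_nonneg h4 ?_
      have : 16 * (1 + s) ^ 4 - (s ^ 2 + 4 * s + 5)
        = 16 * s ^ 4 + 64 * s ^ 3 + 95 * s ^ 2 + 60 * s + 11 := by ring
      rw [this]; positivity
    nlinarith [this]

/-! ### Euclidean geometry of the unit sphere -/

lemma enorm2_eq {n : ℕ} (x : Fin n → ℝ) : enorm2 x = √(x ⬝ᵥ x) := by
  simp [enorm2, dotProduct, sq]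

lemma continuous_enorm2 {n : ℕ} : Continuous (enorm2 : (Fin n → ℝ) → ℝ) := by
  unfold enorm2; fun_prop

lemma dot_self_of_enorm2 {n : ℕ} {x : Fin n → ℝ} (h : enorm2 x = 1) : x ⬝ᵥ x = 1 := by
  rw [enorm2_eq, Real.sqrt_eq_one] at h; exact h

lemma dot_self_nonneg' {n : ℕ} (x : Fin n → ℝ) : 0 ≤ x ⬝ᵥ x :=
  Finset.sum_nonneg fun i _ => mul_self_nonneg (x i)

lemma dot_le_one {n : ℕ} {x y : Fin n → ℝ} (hx : x ⬝ᵥ x = 1) (hy : y ⬝ᵥ y = 1) :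
    x ⬝ᵥ y ≤ 1 := by
  have h := dot_self_nonneg' (x - y)
  simp only [sub_dotProduct, dotProduct_sub, hx, hy, dotProduct_comm y x] at h
  linarith

lemma enorm2_sub_of_unit {n : ℕ} {x y : Fin n → ℝ} (hx : x ⬝ᵥ x = 1) (hy : y ⬝ᵥ y = 1) :
    enorm2 (x - y) = √2 * √(1 - x ⬝ᵥ y) := by
  rw [enorm2_eq, ← Real.sqrt_mul (by norm_num)]
  congr 1
  simp only [sub_dotProduct, dotProduct_sub, hx, hy, dotProduct_comm y x]
  ring

lemma isCompact_unitSphere (n : ℕ) : IsCompact {x : Fin n → ℝ | enorm2 x = 1} := by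
  refine Metric.isCompact_of_isClosed_isBounded
    (isClosed_eq continuous_enorm2 continuous_const) ?_
  refine (Metric.isBounded_closedBall (x := (0 : Fin n → ℝ)) (r := 1)).subset ?_
  intro x hx
  rw [mem_closedBall_zero_iff, pi_norm_le_iff_of_nonneg zero_le_one]
  intro i
  have h : x i * x i ≤ 1 := by
    rw [← dot_self_of_enorm2 hx]
    exact Finset.single_le_sum (f := fun i => x i * x i)
      (fun i _ => mul_self_nonneg (x i)) (Finset.mem_univ i)
  rw [Real.norm_eq_abs, abs_le]
  constructor <;> nlinarith

lemma integrable_of_continuous_of_ae_mem {E : Type*} [TopologicalSpace E] [T2Space E]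
    [MeasurableSpace E] [OpensMeasurableSpace E]
    {m : Measure E} [IsFiniteMeasure m] {K : Set E} (hK : IsCompact K) (h : ∀ᵐ x ∂m, x ∈ K)
    {f : E → ℝ} (hf : Continuous f) : Integrable f m := by
  obtain ⟨C, hC⟩ := hK.exists_bound_of_continuousOn hf.continuousOn
  exact Integrable.of_bound hf.measurable.aestronglyMeasurable C (h.mono hC)

/-! ### Moments of the uniform measure on the sphere -/

namespace IsUniformSphere

variable {n : ℕ} {ν : Measure (Fin n → ℝ)}

lemma ae_unit (h : IsUniformSphere ν) : ∀ᵐ x ∂ν, enorm2 x = 1 := by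
  have := h.1
  exact (mem_ae_iff_prob_eq_one
    (isClosed_eq continuous_enorm2 continuous_const).measurableSet).2 h.2.1

lemma integrable (h : IsUniformSphere ν) {f : (Fin n → ℝ) → ℝ} (hf : Continuous f) :
    Integrable f ν :=
  have := h.1
  integrable_of_continuous_of_ae_mem (isCompact_unitSphere n) h.ae_unit hf

/-- The reflection in the hyperplane orthogonal to `y - z` exchanges the unit vectors `y` and `z`,
so the law of `⟨x, y⟩` is that of `⟨x, z⟩`. -/
lemma integral_dot_eq (h : IsUniformSphere ν) {y z : Fin n → ℝ} (hy : y ⬝ᵥ y = 1)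
    (hz : z ⬝ᵥ z = 1) (f : ℝ → ℝ) :
    ∫ x, f (x ⬝ᵥ y) ∂ν = ∫ x, f (x ⬝ᵥ z) ∂ν := by
  by_cases hyz : y = z
  · rw [hyz]
  obtain ⟨v, hv⟩ : ∃ v, v = y - z := ⟨_, rfl⟩
  have hv0 : v ⬝ᵥ v ≠ 0 := by
    rw [Ne, dotProduct_self_eq_zero, hv, sub_eq_zero]; exact hyz
  have hvz : v ⬝ᵥ z = - (v ⬝ᵥ v) / 2 := by
    simp only [hv, sub_dotProduct, dotProduct_sub, hy, hz, dotProduct_comm z y]; ring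
  let A : (Fin n → ℝ) →ₗ[ℝ] (Fin n → ℝ) :=
    { toFun := fun x => x - (2 * (x ⬝ᵥ v) / (v ⬝ᵥ v)) • v
      map_add' := by
        intro a b; ext i
        simp only [add_dotProduct, Pi.add_apply, Pi.sub_apply, Pi.smul_apply, smul_eq_mul]; ring
      map_smul' := by
        intro c a; ext i
        simp only [smul_dotProduct, Pi.sub_apply, Pi.smul_apply, smul_eq_mul,
          RingHom.id_apply]; ring }
  have hA : ∀ x, A x = x - (2 * (x ⬝ᵥ v) / (v ⬝ᵥ v)) • v := fun _ => rfl
  have hinv : Function.Involutive A := by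
    intro x
    have h1 : A x ⬝ᵥ v = - (x ⬝ᵥ v) := by
      simp only [hA, sub_dotProduct, smul_dotProduct, smul_eq_mul]; field_simp; ring
    rw [hA (A x), h1, hA x]
    ext i
    simp only [Pi.sub_apply, Pi.smul_apply, smul_eq_mul]; ring
  let L : (Fin n → ℝ) ≃ₗ[ℝ] (Fin n → ℝ) := LinearEquiv.ofInvolutive A hinv
  have hL : ∀ x, L x = A x := fun _ => rfl
  have hnorm : ∀ x, enorm2 (L x) = enorm2 x := by
    intro x
    rw [enorm2_eq, enorm2_eq, hL, hA]
    congr 1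
    simp only [sub_dotProduct, dotProduct_sub, smul_dotProduct, dotProduct_smul, smul_eq_mul,
      dotProduct_comm v x]
    field_simp; ring
  have hmap := h.2.2 L hnorm
  have hdot : ∀ x, L x ⬝ᵥ z = x ⬝ᵥ y := by
    intro x
    have : x ⬝ᵥ v = x ⬝ᵥ y - x ⬝ᵥ z := by rw [hv, dotProduct_sub]
    simp only [hL, hA, sub_dotProduct, smul_dotProduct, smul_eq_mul, hvz]
    field_simp
    linarith
  let e := L.toContinuousLinearEquiv.toHomeomorph.toMeasurableEquiv
  have he : ∀ x, e x = L x := fun _ => rfl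
  have hmap' : Measure.map e ν = ν := hmap
  calc ∫ x, f (x ⬝ᵥ y) ∂ν = ∫ x, f (e x ⬝ᵥ z) ∂ν := by simp only [he, hdot]
    _ = ∫ x, f (x ⬝ᵥ z) ∂(Measure.map e ν) :=
        (integral_map_equiv e (fun x => f (x ⬝ᵥ z))).symm
    _ = ∫ x, f (x ⬝ᵥ z) ∂ν := by rw [hmap']

lemma integral_odd (h : IsUniformSphere ν) {y : Fin n → ℝ} (hy : y ⬝ᵥ y = 1) {k : ℕ}
    (hk : Odd k) : ∫ x, (x ⬝ᵥ y) ^ k ∂ν = 0 := by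
  have := h.integral_dot_eq hy (z := -y) (by simpa using hy) (fun t => t ^ k)
  simp only [dotProduct_neg, hk.neg_pow, integral_neg] at this
  linarith

lemma integral_coord (h : IsUniformSphere ν) {y : Fin n → ℝ} (hy : y ⬝ᵥ y = 1) (i : Fin n)
    (k : ℕ) : ∫ x, x i ^ k ∂ν = ∫ x, (x ⬝ᵥ y) ^ k ∂ν := by
  have := h.integral_dot_eq (y := Pi.single i 1) (by simp) hy (fun t => t ^ k)
  simpa using this

lemma integral_sq (h : IsUniformSphere ν) {y : Fin n → ℝ} (hy : y ⬝ᵥ y = 1) :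
    n * ∫ x, (x ⬝ᵥ y) ^ 2 ∂ν = 1 := by
  have := h.1
  calc n * ∫ x, (x ⬝ᵥ y) ^ 2 ∂ν = ∑ i : Fin n, ∫ x, x i ^ 2 ∂ν := by
        simp [h.integral_coord hy]
    _ = ∫ x, ∑ i : Fin n, x i ^ 2 ∂ν :=
        (integral_finsetSum _ fun i _ => h.integrable (by fun_prop)).symm
    _ = ∫ x, (1 : ℝ) ∂ν := by
        refine integral_congr_ae (h.ae_unit.mono fun x hx => ?_)
        have := dot_self_of_enorm2 hx
        simpa [dotProduct, sq] using this
    _ = 1 := by simp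

/-- The mixed moment `E x_i² x_j²` is read off from
`((x_i + x_j)/√2)⁴ + ((x_i - x_j)/√2)⁴ = (x_i⁴ + x_j⁴)/2 + 3 x_i² x_j²`, in which each of the two
terms on the left has mean `E x_i⁴`. -/
lemma integral_mixed (h : IsUniformSphere ν) {y : Fin n → ℝ} (hy : y ⬝ᵥ y = 1) {i j : Fin n}
    (hij : i ≠ j) : ∫ x, x i ^ 2 * x j ^ 2 ∂ν = (∫ x, (x ⬝ᵥ y) ^ 4 ∂ν) / 3 := by
  have hs : (√2)⁻¹ * (√2)⁻¹ = (1 / 2 : ℝ) := by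
    rw [← mul_inv, Real.mul_self_sqrt (by norm_num)]; norm_num
  obtain ⟨c, hc⟩ : ∃ c : ℝ, c = (√2)⁻¹ := ⟨_, rfl⟩
  rw [← hc] at hs
  have hc4 : c ^ 4 = 1 / 4 := by
    calc c ^ 4 = (c * c) * (c * c) := by ring
      _ = 1 / 4 := by rw [hs]; norm_num
  have h1 := h.integral_dot_eq (y := Pi.single i c + Pi.single j c)
    (by simp [hij, hij.symm, hs]; norm_num) hy (fun t => t ^ 4)
  have h2 := h.integral_dot_eq (y := Pi.single i c - Pi.single j c)
    (by simp [hij, hij.symm, hs]; norm_num) hy (fun t => t ^ 4)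
  simp only [dotProduct_add, dotProduct_sub, dotProduct_single] at h1 h2
  have h3 := h.integral_coord hy i 4
  have h4 := h.integral_coord hy j 4
  have key : (∫ x, (x i * c + x j * c) ^ 4 ∂ν) + (∫ x, (x i * c - x j * c) ^ 4 ∂ν)
      = (1 / 2) * (∫ x, x i ^ 4 ∂ν) + (1 / 2) * (∫ x, x j ^ 4 ∂ν)
        + 3 * ∫ x, x i ^ 2 * x j ^ 2 ∂ν := by
    rw [← integral_add (h.integrable (by fun_prop)) (h.integrable (by fun_prop)),
      ← integral_const_mul, ← integral_const_mul, ← integral_const_mul,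
      ← integral_add (h.integrable (by fun_prop)) (h.integrable (by fun_prop)),
      ← integral_add (h.integrable (by fun_prop)) (h.integrable (by fun_prop))]
    congr 1
    ext x
    linear_combination (2 * x i ^ 4 + 12 * x i ^ 2 * x j ^ 2 + 2 * x j ^ 4) * hc4
  rw [h1, h2, h3, h4] at key
  linarith

lemma integral_fourth (h : IsUniformSphere ν) {y : Fin n → ℝ} (hy : y ⬝ᵥ y = 1) :
    (n * (n + 2) : ℝ) * ∫ x, (x ⬝ᵥ y) ^ 4 ∂ν = 3 := by
  have := h.1
  obtain ⟨a, ha⟩ : ∃ a, a = ∫ x, (x ⬝ᵥ y) ^ 4 ∂ν := ⟨_, rfl⟩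
  have hterm : ∀ i j : Fin n,
      ∫ x, x i ^ 2 * x j ^ 2 ∂ν = a / 3 + if i = j then 2 * a / 3 else 0 := by
    intro i j
    by_cases hij : i = j
    · subst hij
      have := h.integral_coord hy i 4
      simp only [← pow_add, if_true]
      rw [this, ← ha]; ring
    · rw [h.integral_mixed hy hij, if_neg hij, ← ha, add_zero]
  have h1 : ∑ i : Fin n, ∑ j : Fin n, ∫ x, x i ^ 2 * x j ^ 2 ∂ν = 1 := by
    calc ∑ i : Fin n, ∑ j : Fin n, ∫ x, x i ^ 2 * x j ^ 2 ∂ν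
        = ∑ i : Fin n, ∫ x, ∑ j : Fin n, x i ^ 2 * x j ^ 2 ∂ν :=
          Finset.sum_congr rfl fun i _ =>
            (integral_finsetSum _ fun j _ => h.integrable (by fun_prop)).symm
      _ = ∫ x, ∑ i : Fin n, ∑ j : Fin n, x i ^ 2 * x j ^ 2 ∂ν :=
          (integral_finsetSum _ fun i _ => h.integrable (by fun_prop)).symm
      _ = ∫ x, (1 : ℝ) ∂ν := by
          refine integral_congr_ae (h.ae_unit.mono fun x hx => ?_)
          have hx1 : ∑ i, x i ^ 2 = 1 := by
            have := dot_self_of_enorm2 hx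
            simpa [dotProduct, sq] using this
          simp only [← Finset.mul_sum, hx1, mul_one]
      _ = 1 := by simp
  simp only [hterm, Finset.sum_add_distrib, Finset.sum_ite_eq, Finset.mem_univ, if_true,
    Finset.sum_const, Finset.card_univ, Fintype.card_fin, nsmul_eq_mul] at h1
  rw [← ha]
  linarith

/-- For every fixed unit vector `y`, the mean distance from `y` satisfies the expansion with error
at most `3√2/n²`. -/
lemma integral_enorm2_sub (h : IsUniformSphere ν) (hn : 2 ≤ n) {y : Fin n → ℝ}
    (hy : y ⬝ᵥ y = 1) :
    |(∫ x, enorm2 (x - y) ∂ν) - √2 * (1 - 1 / (8 * n))| ≤ √2 * (3 / n ^ 2) := by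
  have := h.1
  have hn0 : (0 : ℝ) < n := by positivity
  have e1 : ∫ x, x ⬝ᵥ y ∂ν = 0 := by simpa using h.integral_odd hy (k := 1) (by decide)
  have e3 := h.integral_odd hy (k := 3) (by decide)
  have e2 : ∫ x, (x ⬝ᵥ y) ^ 2 ∂ν = 1 / n := by
    rw [eq_div_iff hn0.ne', mul_comm]; exact h.integral_sq hy
  have e4 : ∫ x, (x ⬝ᵥ y) ^ 4 ∂ν ≤ 3 / n ^ 2 := by
    have h4 := h.integral_fourth hy
    have hnn : 0 ≤ ∫ x, (x ⬝ᵥ y) ^ 4 ∂ν := integral_nonneg fun x => by positivity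
    rw [le_div_iff₀ (by positivity)]
    nlinarith [mul_nonneg hn0.le hnn]
  have hcd : Continuous fun x : Fin n → ℝ => x ⬝ᵥ y := by unfold dotProduct; fun_prop
  have ei : ∫ x, enorm2 (x - y) ∂ν = √2 * ∫ x, √(1 - x ⬝ᵥ y) ∂ν := by
    rw [← integral_const_mul]
    exact integral_congr_ae (h.ae_unit.mono fun x hx =>
      enorm2_sub_of_unit (dot_self_of_enorm2 hx) hy)
  have ep : ∫ x, (1 - x ⬝ᵥ y / 2 - (x ⬝ᵥ y) ^ 2 / 8 - (x ⬝ᵥ y) ^ 3 / 16) ∂ν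
      = 1 - 1 / (8 * (n : ℝ)) := by
    rw [integral_sub (h.integrable (by fun_prop)) (h.integrable (by fun_prop)),
      integral_sub (h.integrable (by fun_prop)) (h.integrable (by fun_prop)),
      integral_sub (h.integrable (by fun_prop)) (h.integrable (by fun_prop)),
      integral_div, integral_div, integral_div, e1, e2, e3]
    simp
    ring
  have hb : ∀ᵐ x ∂ν, x ⬝ᵥ y ≤ 1 :=
    h.ae_unit.mono fun x hx => dot_le_one (dot_self_of_enorm2 hx) hy
  have up : ∫ x, √(1 - x ⬝ᵥ y) ∂ν ≤ 1 - 1 / (8 * n) := by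
    rw [← ep]
    exact integral_mono_ae (h.integrable (by fun_prop)) (h.integrable (by fun_prop))
      (hb.mono fun x hx => (sqrt_one_sub_bounds hx).1)
  have lo : 1 - 1 / (8 * n) - ∫ x, (x ⬝ᵥ y) ^ 4 ∂ν ≤ ∫ x, √(1 - x ⬝ᵥ y) ∂ν := by
    rw [← ep, ← integral_sub (h.integrable (by fun_prop)) (h.integrable (by fun_prop))]
    exact integral_mono_ae (h.integrable (by fun_prop)) (h.integrable (by fun_prop))
      (hb.mono fun x hx => (sqrt_one_sub_bounds hx).2)
  rw [ei, ← mul_sub, abs_mul, abs_of_nonneg (Real.sqrt_nonneg 2)]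
  refine mul_le_mul_of_nonneg_left ?_ (Real.sqrt_nonneg 2)
  have : (0 : ℝ) ≤ 3 / n ^ 2 := by positivity
  rw [abs_le]
  constructor <;> linarith

end IsUniformSphere

/-! ### Expected distance of two independent points -/

/-- The mean distance of two independent uniform points, with its quantitative error term. -/
lemma expected_dist_bound {Ω : Type*} [MeasurableSpace Ω] {μ : Measure Ω} [IsProbabilityMeasure μ]
    {n : ℕ} (hn : 2 ≤ n) {ν : Measure (Fin n → ℝ)} (h : IsUniformSphere ν)
    {X Y : Ω → (Fin n → ℝ)} (hIndep : IndepFun X Y μ)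
    (hX : Measure.map X μ = ν) (hY : Measure.map Y μ = ν) :
    |(∫ ω, enorm2 (X ω - Y ω) ∂μ) - √2 * (1 - 1 / (8 * n))| ≤ √2 * (3 / n ^ 2) := by
  have := h.1
  -- A non-measurable map would push `μ` forward to `0`, which is not a probability measure.
  have hXm : AEMeasurable X μ := by
    by_contra hc
    rw [Measure.map_of_not_aemeasurable hc] at hX
    exact IsProbabilityMeasure.ne_zero ν hX.symm
  have hYm : AEMeasurable Y μ := by
    by_contra hc
    rw [Measure.map_of_not_aemeasurable hc] at hY
    exact IsProbabilityMeasure.ne_zero ν hY.symm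
  have hprod := (indepFun_iff_map_prod_eq_prod_map_map hXm hYm).1 hIndep
  rw [hX, hY] at hprod
  have hcont : Continuous fun p : (Fin n → ℝ) × (Fin n → ℝ) => enorm2 (p.1 - p.2) :=
    continuous_enorm2.comp (by fun_prop)
  have hae : ∀ᵐ p ∂(ν.prod ν), p ∈ {x : Fin n → ℝ | enorm2 x = 1} ×ˢ {x | enorm2 x = 1} := by
    have hq1 : ∀ᵐ p ∂(ν.prod ν), enorm2 p.1 = 1 :=
      Measure.quasiMeasurePreserving_fst.ae h.ae_unit
    have hq2 : ∀ᵐ p ∂(ν.prod ν), enorm2 p.2 = 1 :=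
      Measure.quasiMeasurePreserving_snd.ae h.ae_unit
    filter_upwards [hq1, hq2] with p h1 h2 using ⟨h1, h2⟩
  have hint : Integrable (fun p : (Fin n → ℝ) × (Fin n → ℝ) => enorm2 (p.1 - p.2)) (ν.prod ν) :=
    integrable_of_continuous_of_ae_mem
      ((isCompact_unitSphere n).prod (isCompact_unitSphere n)) hae hcont
  have heq : ∫ ω, enorm2 (X ω - Y ω) ∂μ = ∫ y, ∫ x, enorm2 (x - y) ∂ν ∂ν := by
    rw [← integral_prod_symm _ hint, ← hprod,
      integral_map (hXm.prodMk hYm) hcont.measurable.aestronglyMeasurable]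
  have hI := hint.integral_prod_right
  have hconst : ∫ _ : Fin n → ℝ, √2 * (1 - 1 / (8 * n)) ∂ν = √2 * (1 - 1 / (8 * n)) := by simp
  rw [heq, ← hconst, ← integral_sub hI (integrable_const _), ← Real.norm_eq_abs]
  have := norm_integral_le_of_norm_le_const (μ := ν)
    (f := fun y => (∫ x, enorm2 (x - y) ∂ν) - √2 * (1 - 1 / (8 * n)))
    (h.ae_unit.mono fun y hy => h.integral_enorm2_sub hn (dot_self_of_enorm2 hy))
  simpa using this

/-- **The expected distance of two random points on `S^{n-1}` and its limit `√2`.** -/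
theorem expected_dist_sphere_expansion
    {Ω : Type*} [MeasurableSpace Ω] (μ : Measure Ω) [IsProbabilityMeasure μ]
    (ν : (n : ℕ) → Measure (Fin n → ℝ)) (hν : ∀ n, 2 ≤ n → IsUniformSphere (ν n))
    (X Y : (n : ℕ) → Ω → (Fin n → ℝ))
    (hIndep : ∀ n, 2 ≤ n → IndepFun (X n) (Y n) μ)
    (hX : ∀ n, 2 ≤ n → Measure.map (X n) μ = ν n)
    (hY : ∀ n, 2 ≤ n → Measure.map (Y n) μ = ν n) :
    Tendsto (fun n : ℕ => (n : ℝ) *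
      ((∫ ω, enorm2 (X n ω - Y n ω) ∂μ) - Real.sqrt 2 +
        1 / (4 * Real.sqrt 2 * n))) atTop (𝓝 0) := by
  have hlim : Tendsto (fun n : ℕ => (√2 * 3) / (n : ℝ)) atTop (𝓝 0) :=
    tendsto_const_div_atTop_nhds_zero_nat _
  refine squeeze_zero_norm' ?_ hlim
  filter_upwards [eventually_ge_atTop 2] with n hn
  have hn0 : (0 : ℝ) < n := by positivity
  have hb := expected_dist_bound hn (hν n hn) (hIndep n hn) (hX n hn) (hY n hn)
  have hs : √2 * √2 = (2 : ℝ) := Real.mul_self_sqrt (by norm_num)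
  have hs0 : (0 : ℝ) < √2 := by positivity
  have hc : √2 * (1 - 1 / (8 * n)) = √2 - 1 / (4 * √2 * n) := by
    field_simp
    linear_combination (-4 : ℝ) * hs
  rw [hc, sub_sub_eq_add_sub, add_sub_right_comm] at hb
  rw [Real.norm_eq_abs, abs_mul, abs_of_pos hn0]
  calc (n : ℝ) * |(∫ ω, enorm2 (X n ω - Y n ω) ∂μ) - √2 + 1 / (4 * √2 * n)|
      ≤ n * (√2 * (3 / n ^ 2)) := mul_le_mul_of_nonneg_left hb hn0.le
    _ = √2 * 3 / n := by field_simp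
end
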